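/- arXiv:2010.12103 — 2 statements merged into one kernel-verified Lean document; each statement's English description precedes it below -/
import Mathlib

section
/- Fix a sample S = (s_1,…,s_m). Let σ be an n×m random matrix whose entries σ_{j,i} are independent uniform Rademacher (±1) random variables. Then for all 0 < ε ≤ R̂(F,S), Pr_σ( R̂(F,S) ≥ R̂ⁿ_m(F,S,σ) + ε ) ≤ exp( − n m ε² / ( 4 ( ẑ(S) R̂(F,S) + σ̂²_F(S) ) ) ). -/
/-!
The proof is the entropy method on the discrete cube, applied to one row of signs at a time.

Let `W(τ) = sup_f Σ_k τ_k f(s_k)`, so that `n m R̂ⁿ_m` is the sum of `W` over the `n` independent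
rows, and `𝔼 W = m R̂`. Reversing the sign `τ_i` lowers `W` by at most `2 |f(s_i)|`, where `f` is a
(near) maximizer at `τ`; hence every decrease is at most `2 ẑ`, and the squares of the half-decreases
sum to at most `m σ̂²` (`sum_sq_rowSup_sub_flip_le`). The logarithmic Sobolev inequality on the cube
(`cube_log_sobolev`) for `exp (-u W / 2)`, together with `exp y - 1 ≤ y / (1 - y)`, gives

  `Ent (exp (-u W)) ≤ u² m σ̂² / (1 - u ẑ)² · 𝔼 exp (-u W)`.

Put `V = ẑ R̂ + σ̂²` and `t = ε / (2 V)`. Since `ε ≤ R̂`, for `u ≤ t` one has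
`(1 - u ẑ)² ≥ 1 - 2 t ẑ ≥ 1 - ẑ R̂ / V = σ̂² / V`, so the entropy is at most
`u² m V · 𝔼 exp (-u W)`. Herbst's argument (`herbst`) turns this into
`𝔼 exp (-t W) ≤ exp (-t m R̂ + m V t²)`, and Chernoff's bound over the `n` independent rows yields
the exponent `n m (-t ε + V t²) = -n m ε² / (4 V)`.
-/

open MeasureTheory

noncomputable section

/-- Map a Boolean to a `±1` sign: `true ↦ 1`, `false ↦ -1`. -/
def sgnB (x : Bool) : ℝ := if x then 1 else -1

/-- The `n`-Monte-Carlo Empirical Rademacher Average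
`R̂ⁿ_m(F,S,σ) = (1/n) Σ_j sup_{f∈F} (1/m) Σ_i σ_{j,i} f(s_i)`. -/
def mcera {X ι : Type*} (f : ι → X → ℝ) (n m : ℕ) (S : Fin m → X)
    (σ : Fin n → Fin m → Bool) : ℝ :=
  (n : ℝ)⁻¹ * ∑ j : Fin n, ⨆ l : ι, (m : ℝ)⁻¹ * ∑ k : Fin m, sgnB (σ j k) * f l (S k)

/-- Uniform measure on `n × m` sign matrices: the entries are independent
uniform Rademacher (±1) random variables. -/
def radMeasure (n m : ℕ) : Measure (Fin n → Fin m → Bool) :=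
  (PMF.uniformOfFintype (Fin n → Fin m → Bool)).toMeasure

/-- The Empirical Rademacher Average `R̂(F,S) = E_σ[R̂ⁿ_m(F,S,σ)]`. -/
def era {X ι : Type*} (f : ι → X → ℝ) (n m : ℕ) (S : Fin m → X) : ℝ :=
  ∫ σ, mcera f n m S σ ∂(radMeasure n m)

/-- The Rademacher Complexity `R(F,m) = E_S[R̂(F,S)]`, `S` being `m` i.i.d. samples. -/
def rc {X ι : Type*} [MeasurableSpace X] (f : ι → X → ℝ) (n m : ℕ) (μ : Measure X) : ℝ :=
  ∫ S : Fin m → X, era f n m S ∂(Measure.pi fun _ : Fin m => μ)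

/-- `ẑ(S) = sup_{f∈F, 1≤i≤m} |f(s_i)|`. -/
def zhat {X ι : Type*} (f : ι → X → ℝ) {m : ℕ} (S : Fin m → X) : ℝ :=
  ⨆ p : ι × Fin m, |f p.1 (S p.2)|

/-- `ν̂_F(S) = (1/m) sup_{f∈F} Σ_i |f(s_i)|`. -/
def nuhat {X ι : Type*} (f : ι → X → ℝ) {m : ℕ} (S : Fin m → X) : ℝ :=
  (m : ℝ)⁻¹ * ⨆ l : ι, ∑ k : Fin m, |f l (S k)|

/-- The empirical wimpy variance `σ̂²_F(S) = (1/m) sup_{f∈F} Σ_i f(s_i)²`. -/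
def sigma2hat {X ι : Type*} (f : ι → X → ℝ) {m : ℕ} (S : Fin m → X) : ℝ :=
  (m : ℝ)⁻¹ * ⨆ l : ι, ∑ k : Fin m, (f l (S k)) ^ 2

/-- The wimpy variance `σ²_F = sup_{f∈F} E_μ[f²]`. -/
def wimpyVar {X ι : Type*} [MeasurableSpace X] (f : ι → X → ℝ) (μ : Measure X) : ℝ :=
  ⨆ l : ι, ∫ x, (f l x) ^ 2 ∂μ

/-- The positive supremum deviation `SD⁺(F,S) = sup_{f∈F} ((1/m)Σ_i f(s_i) - E_μ[f])`. -/
def sdPlus {X ι : Type*} [MeasurableSpace X] (f : ι → X → ℝ) (μ : Measure X)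
    {m : ℕ} (S : Fin m → X) : ℝ :=
  ⨆ l : ι, ((m : ℝ)⁻¹ * ∑ k : Fin m, f l (S k) - ∫ x, f l x ∂μ)

/-- The negative supremum deviation `SD⁻(F,S) = sup_{f∈F} (E_μ[f] - (1/m)Σ_i f(s_i))`. -/
def sdMinus {X ι : Type*} [MeasurableSpace X] (f : ι → X → ℝ) (μ : Measure X)
    {m : ℕ} (S : Fin m → X) : ℝ :=
  ⨆ l : ι, ((∫ x, f l x ∂μ) - (m : ℝ)⁻¹ * ∑ k : Fin m, f l (S k))

/-- `η_F = sup_{f∈F} E_μ[f] - a`. -/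
def etaF {X ι : Type*} [MeasurableSpace X] (f : ι → X → ℝ) (μ : Measure X) (a : ℝ) : ℝ :=
  (⨆ l : ι, ∫ x, f l x ∂μ) - a

/-- `γ_F = b - inf_{f∈F} E_μ[f]`. -/
def gammaF {X ι : Type*} [MeasurableSpace X] (f : ι → X → ℝ) (μ : Measure X) (b : ℝ) : ℝ :=
  b - ⨅ l : ι, ∫ x, f l x ∂μ

/-- `η̂_F(S) = sup_{f∈F} (1/m) Σ_i f(s_i) - a`. -/
def etahat {X ι : Type*} (f : ι → X → ℝ) {m : ℕ} (S : Fin m → X) (a : ℝ) : ℝ :=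
  (⨆ l : ι, (m : ℝ)⁻¹ * ∑ k : Fin m, f l (S k)) - a

/-- `γ̂_F(S) = b - sup_{f∈F} (1/m) Σ_i f(s_i)`. -/
def gammahat {X ι : Type*} (f : ι → X → ℝ) {m : ℕ} (S : Fin m → X) (b : ℝ) : ℝ :=
  b - ⨆ l : ι, (m : ℝ)⁻¹ * ∑ k : Fin m, f l (S k)

/-- `h(x) = (1+x) ln(1+x) - x`. -/
def hfun (x : ℝ) : ℝ := (1 + x) * Real.log (1 + x) - x

/-- `g(σ) = n m R̂ⁿ_m(F,S,σ) = Σ_j sup_{f∈F} Σ_i σ_{j,i} f(s_i)`. -/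
def gup {X ι : Type*} (f : ι → X → ℝ) {n m : ℕ} (S : Fin m → X)
    (σ : Fin n → Fin m → Bool) : ℝ :=
  ∑ j : Fin n, ⨆ l : ι, ∑ k : Fin m, sgnB (σ j k) * f l (S k)

/-- `g_{j,i}(σ)`: infimum over `σ'_{j,i} ∈ {-1,1}` of `g` evaluated at `σ` with its
`(j,i)` entry replaced by `σ'_{j,i}`. -/
def gji {X ι : Type*} (f : ι → X → ℝ) {n m : ℕ} (S : Fin m → X)
    (σ : Fin n → Fin m → Bool) (j : Fin n) (i : Fin m) : ℝ :=
  min (gup f S (Function.update σ j (Function.update (σ j) i true)))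
      (gup f S (Function.update σ j (Function.update (σ j) i false)))

/-- `g(S) = m SD⁺(F,S) = sup_{f∈F} (Σ_i f(s_i) - m E_μ[f])`. -/
def gSDp {X ι : Type*} [MeasurableSpace X] (f : ι → X → ℝ) (μ : Measure X)
    {m : ℕ} (S : Fin m → X) : ℝ :=
  ⨆ l : ι, (∑ k : Fin m, f l (S k) - m * ∫ x, f l x ∂μ)

/-- `g_i(S) = inf_{s'_i ∈ X} g(s_1,…,s_{i-1},s'_i,s_{i+1},…,s_m)` for `g = m SD⁺`. -/
def gSDpi {X ι : Type*} [MeasurableSpace X] (f : ι → X → ℝ) (μ : Measure X)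
    {m : ℕ} (S : Fin m → X) (i : Fin m) : ℝ :=
  ⨅ s' : X, gSDp f μ (Function.update S i s')

/-- `g(S) = m SD⁻(F,S) = sup_{f∈F} (m E_μ[f] - Σ_i f(s_i))`. -/
def gSDm {X ι : Type*} [MeasurableSpace X] (f : ι → X → ℝ) (μ : Measure X)
    {m : ℕ} (S : Fin m → X) : ℝ :=
  ⨆ l : ι, ((m : ℝ) * (∫ x, f l x ∂μ) - ∑ k : Fin m, f l (S k))

/-- `g_i(S) = inf_{s'_i ∈ X} g(s_1,…,s_{i-1},s'_i,s_{i+1},…,s_m)` for `g = m SD⁻`. -/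
def gSDmi {X ι : Type*} [MeasurableSpace X] (f : ι → X → ℝ) (μ : Measure X)
    {m : ℕ} (S : Fin m → X) (i : Fin m) : ℝ :=
  ⨅ s' : X, gSDm f μ (Function.update S i s')

/-- `g(S) = m σ̂²_F(S) = sup_{f∈F} Σ_i f(s_i)²`. -/
def gWv {X ι : Type*} (f : ι → X → ℝ) {m : ℕ} (S : Fin m → X) : ℝ :=
  ⨆ l : ι, ∑ k : Fin m, (f l (S k)) ^ 2

/-- `g_j(S) = sup_{f∈F} Σ_{i≠j} f(s_i)²`. -/
def gWvj {X ι : Type*} (f : ι → X → ℝ) {m : ℕ} (S : Fin m → X) (j : Fin m) : ℝ :=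
  ⨆ l : ι, ∑ k ∈ Finset.univ.erase j, (f l (S k)) ^ 2

open scoped BigOperators

/-! ### The logarithmic Sobolev inequality on the cube -/

/-- The logarithmic Sobolev inequality on two points, in hyperbolic coordinates. After division by
`cosh θ`, the difference of the two sides vanishes at `0` and has derivative
`(sinh θ - θ) / cosh² θ`. -/
theorem two_point_log_cosh (θ : ℝ) :
    θ * Real.sinh θ - Real.cosh θ * Real.log (Real.cosh θ) ≤ Real.cosh θ - 1 := by
  wlog hθ : 0 ≤ θ generalizing θ
  · have := this (-θ) (by linarith)
    simpa using this
  let D : ℝ → ℝ := fun x =>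
    1 - (Real.cosh x)⁻¹ - x * (Real.sinh x / Real.cosh x) + Real.log (Real.cosh x)
  have hder : ∀ x, HasDerivAt D ((Real.sinh x - x) / Real.cosh x ^ 2) x := by
    intro x
    have hc : Real.cosh x ≠ 0 := (Real.cosh_pos x).ne'
    have h1 := (Real.hasDerivAt_cosh x).inv hc
    have h2 := (hasDerivAt_id x).mul ((Real.hasDerivAt_sinh x).div (Real.hasDerivAt_cosh x) hc)
    have h3 := (Real.hasDerivAt_cosh x).log hc
    have h := ((h1.const_sub 1).sub h2).add h3
    refine h.congr_deriv ?_
    have := Real.cosh_sq x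
    simp only [id, Pi.div_apply]
    field_simp
    rw [this]
    ring
  have hmono : MonotoneOn D (Set.Ici 0) := by
    apply monotoneOn_of_deriv_nonneg (convex_Ici 0)
    · exact fun x _ => (hder x).continuousAt.continuousWithinAt
    · exact fun x _ => (hder x).differentiableAt.differentiableWithinAt
    · intro x hx
      rw [interior_Ici] at hx
      rw [(hder x).deriv]
      have : x ≤ Real.sinh x := Real.self_le_sinh_iff.2 (le_of_lt hx)
      have : 0 ≤ Real.sinh x - x := by linarith
      positivity
  have h0 := hmono (Set.mem_Ici.2 le_rfl) (Set.mem_Ici.2 hθ) hθ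
  have hc := Real.cosh_pos θ
  simp only [D, Real.cosh_zero, Real.log_one] at h0
  have h1 := mul_le_mul_of_nonneg_left h0 hc.le
  have e : Real.cosh θ * (1 - (Real.cosh θ)⁻¹ - θ * (Real.sinh θ / Real.cosh θ)
      + Real.log (Real.cosh θ)) = Real.cosh θ - 1 - θ * Real.sinh θ
      + Real.cosh θ * Real.log (Real.cosh θ) := by field_simp
  rw [e] at h1
  norm_num at h1
  linarith

/-- The logarithmic Sobolev inequality on two points for the values `A = α²`, `B = β²`; the
right-hand side is `(α - β)² / 2`. -/
theorem two_point_entropy (A B : ℝ) (hA : 0 < A) (hB : 0 < B) :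
    (A * Real.log A + B * Real.log B) / 2 - (A + B) / 2 * Real.log ((A + B) / 2) ≤
      (A + B) / 2 - √(A * B) := by
  set x := Real.log A with hx
  set y := Real.log B with hy
  set c := (x + y) / 2 with hc
  set θ := (x - y) / 2 with hθ
  have eA : A = Real.exp c * Real.exp θ := by
    rw [← Real.exp_add, ← Real.exp_log hA]; congr 1; rw [hc, hθ]; ring
  have eB : B = Real.exp c * Real.exp (-θ) := by
    rw [← Real.exp_add, ← Real.exp_log hB]; congr 1; rw [hc, hθ]; ring
  have eM : (A + B) / 2 = Real.exp c * Real.cosh θ := by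
    rw [eA, eB, Real.cosh_eq]; ring
  have eD : (A - B) / 2 = Real.exp c * Real.sinh θ := by
    rw [eA, eB, Real.sinh_eq]; ring
  have eS : √(A * B) = Real.exp c := by
    rw [Real.sqrt_eq_iff_mul_self_eq (by positivity) (by positivity), eA, eB, Real.exp_neg]
    field_simp
  have hlog : Real.log ((A + B) / 2) = c + Real.log (Real.cosh θ) := by
    rw [eM, Real.log_mul (by positivity) (Real.cosh_pos θ).ne', Real.log_exp]
  have e1 : (A * x + B * y) / 2 = (A + B) / 2 * c + (A - B) / 2 * θ := by
    rw [hc, hθ]; ring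
  rw [e1, hlog, eS, eM, eD]
  have := mul_le_mul_of_nonneg_left (two_point_log_cosh θ) (Real.exp_pos c).le
  linarith

theorem expect_cube_succ (m : ℕ) (F : (Fin (m + 1) → Bool) → ℝ) :
    𝔼 τ, F τ = ((𝔼 τ : Fin m → Bool, F (Fin.cons true τ)) +
      𝔼 τ : Fin m → Bool, F (Fin.cons false τ)) / 2 := by
  simp only [Fintype.expect_eq_sum_div_card]
  rw [← (Fin.consEquiv (fun _ : Fin (m + 1) => Bool)).sum_comp, Fintype.sum_prod_type]
  simp [Fin.consEquiv, pow_succ]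
  field_simp

theorem expect_mul_le_sqrt {α : Type*} [Fintype α] (p q : α → ℝ) :
    𝔼 x, p x * q x ≤ √((𝔼 x, p x ^ 2) * 𝔼 x, q x ^ 2) := by
  apply Real.le_sqrt_of_sq_le
  exact Finset.expect_mul_sq_le_sq_mul_sq _ _ _

/-- The sign vector `τ` with its `i`-th sign reversed. -/
def flipBit {m : ℕ} (i : Fin m) (τ : Fin m → Bool) : Fin m → Bool :=
  Function.update τ i (!τ i)

theorem flipBit_flipBit {m : ℕ} (i : Fin m) (τ : Fin m → Bool) :
    flipBit i (flipBit i τ) = τ := by simp [flipBit]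

theorem flipBit_zero_cons {m : ℕ} (c : Bool) (τ : Fin m → Bool) :
    flipBit 0 (Fin.cons c τ : Fin (m + 1) → Bool) = Fin.cons (!c) τ := by
  simp [flipBit]

theorem flipBit_succ_cons {m : ℕ} (i : Fin m) (c : Bool) (τ : Fin m → Bool) :
    flipBit i.succ (Fin.cons c τ : Fin (m + 1) → Bool) = Fin.cons c (flipBit i τ) := by
  simp [flipBit, Fin.cons_update]

/-- The logarithmic Sobolev inequality on the discrete cube with uniform measure. In the induction
the entropy splits into the mean of the entropies of the two half-cubes plus the two-point entropy
of the squared `L²` norms, and the latter is absorbed by the Cauchy–Schwarz inequality. -/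
theorem cube_log_sobolev (m : ℕ) (h : (Fin m → Bool) → ℝ) (hpos : ∀ τ, 0 < h τ) :
    (𝔼 τ, h τ ^ 2 * Real.log (h τ ^ 2)) - (𝔼 τ, h τ ^ 2) * Real.log (𝔼 τ, h τ ^ 2) ≤
      1 / 2 * ∑ i, 𝔼 τ, (h τ - h (flipBit i τ)) ^ 2 := by
  induction m with
  | zero => simp
  | succ m ih =>
    have i1 := ih (fun τ => h (Fin.cons true τ)) (fun τ => hpos _)
    have i0 := ih (fun τ => h (Fin.cons false τ)) (fun τ => hpos _)
    have p1 : 0 < 𝔼 τ : Fin m → Bool, h (Fin.cons true τ) ^ 2 :=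
      Finset.expect_pos (fun τ _ => pow_pos (hpos _) 2) Finset.univ_nonempty
    have p0 : 0 < 𝔼 τ : Fin m → Bool, h (Fin.cons false τ) ^ 2 :=
      Finset.expect_pos (fun τ _ => pow_pos (hpos _) 2) Finset.univ_nonempty
    have h2 := two_point_entropy _ _ p1 p0
    have cs := expect_mul_le_sqrt (fun τ : Fin m → Bool => h (Fin.cons true τ))
      (fun τ => h (Fin.cons false τ))
    have e0 : 𝔼 τ : Fin m → Bool, (h (Fin.cons true τ) - h (Fin.cons false τ)) ^ 2 =
        (𝔼 τ : Fin m → Bool, h (Fin.cons true τ) ^ 2) +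
        (𝔼 τ : Fin m → Bool, h (Fin.cons false τ) ^ 2) -
        2 * 𝔼 τ : Fin m → Bool, h (Fin.cons true τ) * h (Fin.cons false τ) := by
      rw [Finset.mul_expect, ← Finset.expect_add_distrib, ← Finset.expect_sub_distrib]
      exact Finset.expect_congr rfl fun τ _ => by ring
    have e0' : 𝔼 τ : Fin m → Bool, (h (Fin.cons false τ) - h (Fin.cons true τ)) ^ 2 =
        𝔼 τ : Fin m → Bool, (h (Fin.cons true τ) - h (Fin.cons false τ)) ^ 2 :=
      Finset.expect_congr rfl fun τ _ => by ring
    rw [Fin.sum_univ_succ]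
    simp only [expect_cube_succ m, flipBit_zero_cons, flipBit_succ_cons, Bool.not_true,
      Bool.not_false, e0', ← Finset.sum_div, Finset.sum_add_distrib]
    rw [e0]
    linarith

/-! ### From entropy to the lower Laplace transform -/

/-- Herbst's argument: if the entropy of `exp (-u W)` is at most `u² v` times its mean for all
`u ∈ (0, t]`, then `u ↦ log (𝔼 exp (-u W)) / u - v u` is antitone on `(0, t]` and tends to `-𝔼 W`
at `0`, which bounds the Laplace transform at `-t`. -/
theorem herbst (m : ℕ) (W : (Fin m → Bool) → ℝ) (v t : ℝ) (ht : 0 < t)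
    (hent : ∀ u : ℝ, 0 < u → u ≤ t →
      (𝔼 τ, Real.exp (-u * W τ) * (-u * W τ)) -
        (𝔼 τ, Real.exp (-u * W τ)) * Real.log (𝔼 τ, Real.exp (-u * W τ)) ≤
      u ^ 2 * v * 𝔼 τ, Real.exp (-u * W τ)) :
    𝔼 τ, Real.exp (-t * W τ) ≤ Real.exp (-t * (𝔼 τ, W τ) + v * t ^ 2) := by
  let M : ℝ → ℝ := fun u => 𝔼 τ, Real.exp (-u * W τ)
  have hM : ∀ u, 0 < M u := fun u =>
    Finset.expect_pos (fun τ _ => Real.exp_pos _) Finset.univ_nonempty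
  have hMd : ∀ u, HasDerivAt M (𝔼 τ, Real.exp (-u * W τ) * (-W τ)) u := by
    intro u
    have : ∀ τ ∈ (Finset.univ : Finset (Fin m → Bool)),
        HasDerivAt (fun u => Real.exp (-u * W τ)) (Real.exp (-u * W τ) * (-W τ)) u := by
      intro τ _
      have := ((hasDerivAt_id u).neg.mul_const (W τ)).exp
      simpa using this
    have h := (HasDerivAt.fun_sum this).div_const (Fintype.card (Fin m → Bool) : ℝ)
    simpa only [M, Fintype.expect_eq_sum_div_card] using h
  have hM0 : M 0 = 1 := by simp [M]
  have hH0 : HasDerivAt (fun u => Real.log (M u)) (-𝔼 τ, W τ) 0 := by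
    have h := (hMd 0).log (hM 0).ne'
    rw [hM0] at h
    simpa using h
  let ψ : ℝ → ℝ := fun u => Real.log (M u) / u - v * u
  have hψd : ∀ u, 0 < u → HasDerivAt ψ
      (((𝔼 τ, Real.exp (-u * W τ) * (-W τ)) / M u * u - Real.log (M u)) / u ^ 2 - v) u := by
    intro u hu
    have h1 := ((hMd u).log (hM u).ne').div (hasDerivAt_id u) hu.ne'
    have h2 := h1.sub ((hasDerivAt_id u).const_mul v)
    refine h2.congr_deriv ?_
    simp
  have hanti : AntitoneOn ψ (Set.Ioc 0 t) := by
    apply antitoneOn_of_deriv_nonpos (convex_Ioc 0 t)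
    · exact fun x hx => (hψd x hx.1).continuousAt.continuousWithinAt
    · intro x hx
      rw [interior_Ioc] at hx
      exact (hψd x hx.1).differentiableAt.differentiableWithinAt
    · intro u hu
      rw [interior_Ioc] at hu
      rw [(hψd u hu.1).deriv]
      have h := hent u hu.1 hu.2.le
      have e : (𝔼 τ, Real.exp (-u * W τ) * (-u * W τ)) =
          u * 𝔼 τ, Real.exp (-u * W τ) * (-W τ) := by
        rw [Finset.mul_expect]
        exact Finset.expect_congr rfl fun τ _ => by ring
      rw [e] at h
      change u * _ - M u * Real.log (M u) ≤ u ^ 2 * v * M u at h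
      rw [sub_nonpos, div_le_iff₀ (pow_pos hu.1 2)]
      have hMu := hM u
      have : (𝔼 τ, Real.exp (-u * W τ) * (-W τ)) / M u * u - Real.log (M u) =
        (u * (𝔼 τ, Real.exp (-u * W τ) * (-W τ)) - M u * Real.log (M u)) / M u := by
        field_simp
      rw [this, div_le_iff₀ hMu]
      linarith
  have hlim : Filter.Tendsto ψ (nhdsWithin 0 (Set.Ioi 0)) (nhds (-𝔼 τ, W τ)) := by
    have h1 := hH0.tendsto_slope_zero_right
    have h2 : Filter.Tendsto (fun u : ℝ => v * u) (nhdsWithin 0 (Set.Ioi 0)) (nhds 0) := by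
      have : Filter.Tendsto (fun u : ℝ => v * u) (nhds 0) (nhds (v * 0)) :=
        (continuous_const.mul continuous_id).tendsto 0
      rw [mul_zero] at this
      exact this.mono_left nhdsWithin_le_nhds
    have h3 := h1.sub h2
    rw [sub_zero] at h3
    refine h3.congr fun u => ?_
    simp [ψ, hM0, div_eq_inv_mul]
  have hle : ψ t ≤ -𝔼 τ, W τ := by
    refine ge_of_tendsto hlim ?_
    filter_upwards [Ioc_mem_nhdsGT ht] with u hu
    exact hanti hu ⟨ht, le_rfl⟩ hu.2
  have h4 : Real.log (M t) ≤ -t * (𝔼 τ, W τ) + v * t ^ 2 := by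
    have : Real.log (M t) / t ≤ -(𝔼 τ, W τ) + v * t := by
      simp only [ψ] at hle; linarith
    rw [div_le_iff₀ ht] at this
    linarith
  exact (Real.log_le_iff_le_exp (hM t)).1 h4

theorem expect_flip {m : ℕ} (i : Fin m) (F : (Fin m → Bool) → ℝ) :
    𝔼 τ, F (flipBit i τ) = 𝔼 τ, F τ :=
  Fintype.expect_equiv (Function.Involutive.toPerm _ (flipBit_flipBit i)) _ _ fun _ => rfl

/-- The map `τ ↦ flipBit i τ` preserves the uniform measure and exchanges the increases and the
decreases of `h`, so only the increases need to be counted, twice. -/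
theorem expect_sq_sub_flip {m : ℕ} (i : Fin m) (h : (Fin m → Bool) → ℝ) :
    𝔼 τ, (h τ - h (flipBit i τ)) ^ 2 = 2 * 𝔼 τ, (max (h (flipBit i τ) - h τ) 0) ^ 2 := by
  have e : 𝔼 τ, (max (h τ - h (flipBit i τ)) 0) ^ 2 =
      𝔼 τ, (max (h (flipBit i τ) - h τ) 0) ^ 2 := by
    rw [← expect_flip i]
    simp only [flipBit_flipBit]
  rw [two_mul]
  nth_rewrite 1 [← e]
  rw [← Finset.expect_add_distrib]
  refine Finset.expect_congr rfl fun τ _ => ?_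
  rcases le_total (h τ) (h (flipBit i τ)) with hle | hle
  · rw [max_eq_right (by linarith), max_eq_left (by linarith)]; ring
  · rw [max_eq_left (by linarith), max_eq_right (by linarith)]; ring

/-- Lower Laplace transform bound for a function `W` on the cube whose decreases under a single flip
are at most `2 z` and have halves with square sum at most `s`. The variance factor `v` has to exceed
`s` by the factor `(1 - t z)⁻²`, which comes from `exp y - 1 ≤ y / (1 - y)`. -/
theorem laplace_lower (m : ℕ) (W : (Fin m → Bool) → ℝ) (z s v t : ℝ) (ht : 0 < t)
    (hz : 0 ≤ z) (htz : t * z < 1) (hsv : s ≤ v * (1 - t * z) ^ 2)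
    (hd : ∀ τ i, W τ - W (flipBit i τ) ≤ 2 * z)
    (hV : ∀ τ, ∑ i, (max ((W τ - W (flipBit i τ)) / 2) 0) ^ 2 ≤ s) :
    𝔼 τ, Real.exp (-t * W τ) ≤ Real.exp (-t * (𝔼 τ, W τ) + v * t ^ 2) := by
  refine herbst m W v t ht fun u hu hut => ?_
  have huz : u * z ≤ t * z := mul_le_mul_of_nonneg_right hut hz
  have hden : 0 < 1 - t * z := by linarith
  have L := cube_log_sobolev m (fun τ => Real.exp (-u * W τ / 2)) (fun τ => Real.exp_pos _)
  have sq : ∀ τ, Real.exp (-u * W τ / 2) ^ 2 = Real.exp (-u * W τ) := by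
    intro τ; rw [← Real.exp_nat_mul]; congr 1; push_cast; ring
  simp only [sq, Real.log_exp] at L
  refine L.trans ?_
  simp only [expect_sq_sub_flip _ (fun τ => Real.exp (-u * W τ / 2))]
  rw [← Finset.mul_sum, ← mul_assoc, one_div, inv_mul_cancel₀ two_ne_zero, one_mul,
    ← Finset.expect_sum_comm, Finset.mul_expect]
  refine Finset.expect_le_expect fun τ _ => ?_
  have key : ∀ i, (max (Real.exp (-u * W (flipBit i τ) / 2) - Real.exp (-u * W τ / 2)) 0) ^ 2 ≤
      Real.exp (-u * W τ) * (u ^ 2 / (1 - t * z) ^ 2 *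
        (max ((W τ - W (flipBit i τ)) / 2) 0) ^ 2) := by
    intro i
    set y := max ((W τ - W (flipBit i τ)) / 2) 0 with hy
    have hy0 : 0 ≤ y := le_max_right _ _
    have hyz : y ≤ z := max_le (by linarith [hd τ i]) hz
    have huy : u * y ≤ t * z := mul_le_mul hut hyz hy0 ht.le
    have huy0 : 0 ≤ u * y := by positivity
    have h1 : Real.exp (u * y) - 1 ≤ u * y / (1 - t * z) := by
      have h2 : Real.exp (u * y) * (1 - u * y) ≤ 1 := by
        have := Real.one_sub_le_exp_neg (u * y)
        calc _ ≤ Real.exp (u * y) * Real.exp (-(u * y)) := by gcongr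
          _ = 1 := by rw [← Real.exp_add]; simp
      have h3 : 1 ≤ Real.exp (u * y) := Real.one_le_exp huy0
      rw [le_div_iff₀ hden]
      nlinarith
    have h2 : max (Real.exp (-u * W (flipBit i τ) / 2) - Real.exp (-u * W τ / 2)) 0 ≤
        Real.exp (-u * W τ / 2) * (u * y / (1 - t * z)) := by
      refine max_le ?_ (by positivity)
      have : Real.exp (-u * W (flipBit i τ) / 2) ≤
          Real.exp (-u * W τ / 2) * Real.exp (u * y) := by
        rw [← Real.exp_add]
        apply Real.exp_le_exp.2
        have := mul_le_mul_of_nonneg_left (le_max_left ((W τ - W (flipBit i τ)) / 2) 0) hu.le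
        rw [← hy] at this
        linarith
      have := mul_le_mul_of_nonneg_left h1 (Real.exp_pos (-u * W τ / 2)).le
      linarith
    calc _ ≤ (Real.exp (-u * W τ / 2) * (u * y / (1 - t * z))) ^ 2 :=
          pow_le_pow_left₀ (le_max_right _ _) h2 2
      _ = _ := by rw [mul_pow, sq, div_pow, mul_pow]; ring
  refine (Finset.sum_le_sum fun i _ => key i).trans ?_
  rw [← Finset.mul_sum, ← Finset.mul_sum, mul_comm]
  refine mul_le_mul_of_nonneg_right ?_ (Real.exp_pos _).le
  have : s / (1 - t * z) ^ 2 ≤ v := by rwa [div_le_iff₀ (by positivity)]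
  calc _ ≤ u ^ 2 / (1 - t * z) ^ 2 * s := by gcongr; exact hV τ
    _ = u ^ 2 * (s / (1 - t * z) ^ 2) := by ring
    _ ≤ _ := by gcongr

/-! ### Averages over sign matrices -/

/-- Independence of the coordinates under the uniform measure on a power. -/
theorem expect_pi_prod {n : ℕ} {A : Type*} [Fintype A] (g : Fin n → A → ℝ) :
    𝔼 σ : Fin n → A, ∏ j, g j (σ j) = ∏ j, 𝔼 x, g j x := by
  classical
  simp only [Fintype.expect_eq_sum_div_card, Finset.prod_div_distrib]
  rw [Finset.prod_univ_sum, Fintype.piFinset_univ]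
  simp

theorem expect_pi_eval {n : ℕ} {A : Type*} [Fintype A] [Nonempty A] (W : A → ℝ) (j : Fin n) :
    𝔼 σ : Fin n → A, W (σ j) = 𝔼 x, W x := by
  have h := expect_pi_prod (fun (k : Fin n) (x : A) => if k = j then W x else 1)
  have e : ∀ k, (𝔼 x : A, if k = j then W x else 1) = if k = j then 𝔼 x, W x else 1 := by
    intro k; split_ifs <;> simp
  simpa only [e, Finset.prod_ite_eq', Finset.mem_univ, if_true] using h

theorem integral_radMeasure (n m : ℕ) (F : (Fin n → Fin m → Bool) → ℝ) :
    ∫ σ, F σ ∂(radMeasure n m) = 𝔼 σ, F σ := by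
  rw [radMeasure, PMF.integral_eq_sum, Fintype.expect_eq_sum_div_card, Finset.sum_div]
  refine Finset.sum_congr rfl fun σ _ => ?_
  rw [PMF.uniformOfFintype_apply, ENNReal.toReal_inv, ENNReal.toReal_natCast, smul_eq_mul,
    inv_mul_eq_div]

/-- The contribution `sup_f Σ_k τ_k f(s_k)` of one row `τ` of signs, without normalization. -/
def rowSup {X ι : Type*} (f : ι → X → ℝ) {m : ℕ} (S : Fin m → X) (τ : Fin m → Bool) : ℝ :=
  ⨆ l : ι, ∑ k : Fin m, sgnB (τ k) * f l (S k)

theorem mcera_eq_rowSup {X ι : Type*} (f : ι → X → ℝ) (n m : ℕ) (S : Fin m → X)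
    (σ : Fin n → Fin m → Bool) :
    mcera f n m S σ = (n : ℝ)⁻¹ * ((m : ℝ)⁻¹ * ∑ j, rowSup f S (σ j)) := by
  rw [mcera]
  congr 1
  rw [Finset.mul_sum]
  refine Finset.sum_congr rfl fun j _ => ?_
  rw [rowSup, Real.mul_iSup_of_nonneg (by positivity)]

theorem era_eq_rowSup {X ι : Type*} (f : ι → X → ℝ) (n m : ℕ) (hn : 0 < n) (S : Fin m → X) :
    era f n m S = (m : ℝ)⁻¹ * 𝔼 τ, rowSup f S τ := by
  rw [era, integral_radMeasure]
  simp only [mcera_eq_rowSup, ← Finset.mul_expect, Finset.expect_sum_comm, expect_pi_eval]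
  have : (n : ℝ) ≠ 0 := by positivity
  simp
  field_simp

/-! ### Single-flip differences of the row supremum -/

theorem abs_sgnB_mul (c : Bool) (x : ℝ) : |sgnB c * x| = |x| := by
  cases c <;> simp [sgnB]

theorem bddAbove_row {X ι : Type*} (f : ι → X → ℝ) {m : ℕ} (S : Fin m → X) (z : ℝ)
    (hz : ∀ l k, |f l (S k)| ≤ z) (τ : Fin m → Bool) :
    BddAbove (Set.range fun l : ι => ∑ k : Fin m, sgnB (τ k) * f l (S k)) := by
  refine ⟨∑ _k : Fin m, z, ?_⟩
  rintro _ ⟨l, rfl⟩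
  refine Finset.sum_le_sum fun k _ => (le_abs_self _).trans ?_
  rw [abs_sgnB_mul]
  exact hz l k

theorem sum_flip_ge {X ι : Type*} (f : ι → X → ℝ) {m : ℕ} (S : Fin m → X) (l : ι)
    (τ : Fin m → Bool) (i : Fin m) :
    ∑ k, sgnB (τ k) * f l (S k) - 2 * |f l (S i)| ≤
      ∑ k, sgnB (flipBit i τ k) * f l (S k) := by
  have h : ∑ k, (sgnB (τ k) * f l (S k) - sgnB (flipBit i τ k) * f l (S k)) =
      sgnB (τ i) * f l (S i) - sgnB (flipBit i τ i) * f l (S i) := by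
    refine Finset.sum_eq_single i (fun k _ hk => ?_) (by simp)
    simp [flipBit, Function.update_of_ne hk]
  rw [Finset.sum_sub_distrib] at h
  have h1 := le_abs_self (sgnB (τ i) * f l (S i))
  have h2 := neg_abs_le (sgnB (flipBit i τ i) * f l (S i))
  rw [abs_sgnB_mul] at h1 h2
  linarith

/-- The function `f l` nearly attaining the supremum at `τ` controls all the single-flip decreases
simultaneously. The slack `δ` is needed because the supremum may not be attained. -/
theorem rowSup_near_max {X ι : Type*} [Nonempty ι] (f : ι → X → ℝ) {m : ℕ} (S : Fin m → X)
    (z : ℝ) (hz : ∀ l k, |f l (S k)| ≤ z) (τ : Fin m → Bool) (δ : ℝ) (hδ : 0 < δ) :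
    ∃ l, ∀ i, (rowSup f S τ - rowSup f S (flipBit i τ)) / 2 ≤ |f l (S i)| + δ := by
  obtain ⟨l, hl⟩ := exists_lt_of_lt_ciSup
    (show rowSup f S τ - δ < ⨆ l : ι, ∑ k : Fin m, sgnB (τ k) * f l (S k) by
      rw [rowSup]; linarith)
  refine ⟨l, fun i => ?_⟩
  have h1 : _ ≤ rowSup f S (flipBit i τ) := le_ciSup (bddAbove_row f S z hz (flipBit i τ)) l
  have h2 := sum_flip_ge f S l τ i
  linarith

theorem rowSup_sub_flip_le {X ι : Type*} [Nonempty ι] (f : ι → X → ℝ) {m : ℕ} (S : Fin m → X)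
    (z : ℝ) (hz : ∀ l k, |f l (S k)| ≤ z) (τ : Fin m → Bool) (i : Fin m) :
    rowSup f S τ - rowSup f S (flipBit i τ) ≤ 2 * z := by
  refine le_of_forall_pos_le_add fun δ hδ => ?_
  obtain ⟨l, hl⟩ := rowSup_near_max f S z hz τ (δ / 2) (by positivity)
  linarith [hl i, hz l i]

theorem sum_sq_rowSup_sub_flip_le {X ι : Type*} [Nonempty ι] (f : ι → X → ℝ) {m : ℕ}
    (S : Fin m → X) (z s : ℝ) (hz : ∀ l k, |f l (S k)| ≤ z)
    (hs : ∀ l, ∑ k, f l (S k) ^ 2 ≤ s) (τ : Fin m → Bool) :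
    ∑ i, (max ((rowSup f S τ - rowSup f S (flipBit i τ)) / 2) 0) ^ 2 ≤ s := by
  have hlim : Filter.Tendsto (fun δ : ℝ => s + m * (2 * δ * z + δ ^ 2))
      (nhdsWithin 0 (Set.Ioi 0)) (nhds s) := by
    have h : Filter.Tendsto (fun δ : ℝ => s + m * (2 * δ * z + δ ^ 2)) (nhds 0)
        (nhds (s + m * (2 * 0 * z + 0 ^ 2))) :=
      (by fun_prop : Continuous fun δ : ℝ => s + m * (2 * δ * z + δ ^ 2)).tendsto 0
    simp only [mul_zero, zero_mul, ne_eq, OfNat.ofNat_ne_zero, not_false_eq_true, zero_pow,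
      add_zero] at h
    exact h.mono_left nhdsWithin_le_nhds
  refine ge_of_tendsto hlim ?_
  filter_upwards [self_mem_nhdsWithin] with δ hδ
  have hδ : 0 < δ := hδ
  obtain ⟨l, hl⟩ := rowSup_near_max f S z hz τ δ hδ
  calc _ ≤ ∑ i, (f l (S i) ^ 2 + (2 * δ * z + δ ^ 2)) := by
        refine Finset.sum_le_sum fun i _ => ?_
        have h0 : 0 ≤ |f l (S i)| + δ := by positivity
        refine (pow_le_pow_left₀ (le_max_right _ _) (max_le (hl i) h0) 2).trans ?_
        rw [← sq_abs (f l (S i))]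
        nlinarith [hz l i]
    _ ≤ _ := by
        rw [Finset.sum_add_distrib]
        simp only [Finset.sum_const, Finset.card_univ, Fintype.card_fin, nsmul_eq_mul]
        linarith [hs l]

/-! ### The tail bound -/

theorem stmt_6 {X : Type*} [MeasurableSpace X] {ι : Type*} [Countable ι]
    (f : ι → X → ℝ) (a b : ℝ) (ha : a ≤ 0) (hb : 0 < b)
    (hmeas : ∀ l : ι, Measurable (f l))
    (hrange : ∀ (l : ι) (x : X), f l x ∈ Set.Icc a b)
    (hzero : ∃ l₀ : ι, ∀ x : X, f l₀ x = 0)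
    (n m : ℕ) (hn : 0 < n) (hm : 0 < m) (S : Fin m → X)
    (ε : ℝ) (hε0 : 0 < ε) (hε : ε ≤ era f n m S) :
    (radMeasure n m
        {σ : Fin n → Fin m → Bool | era f n m S ≥ mcera f n m S σ + ε}).toReal ≤
      Real.exp (-((n : ℝ) * (m : ℝ) * ε ^ 2) /
        (4 * (zhat f S * era f n m S + sigma2hat f S))) := by
  obtain ⟨l₀, -⟩ := hzero
  have : Nonempty ι := ⟨l₀⟩
  have hn' : (0 : ℝ) < n := by exact_mod_cast hn
  have hm' : (0 : ℝ) < m := by exact_mod_cast hm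
  have habs : ∀ l x, |f l x| ≤ max (-a) b := fun l x =>
    abs_le'.2 ⟨(hrange l x).2.trans (le_max_right _ _),
      (neg_le_neg (hrange l x).1).trans (le_max_left _ _)⟩
  have hz : ∀ l k, |f l (S k)| ≤ zhat f S := by
    intro l k
    have hbdd : BddAbove (Set.range fun p : ι × Fin m => |f p.1 (S p.2)|) :=
      ⟨max (-a) b, by rintro _ ⟨p, rfl⟩; exact habs _ _⟩
    exact le_ciSup hbdd (l, k)
  have hs : ∀ l, ∑ k, f l (S k) ^ 2 ≤ m * sigma2hat f S := by
    intro l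
    have hbdd : BddAbove (Set.range fun l : ι => ∑ k : Fin m, f l (S k) ^ 2) := by
      refine ⟨∑ _k : Fin m, (max (-a) b) ^ 2, ?_⟩
      rintro _ ⟨l, rfl⟩
      refine Finset.sum_le_sum fun k _ => ?_
      rw [← sq_abs]
      exact pow_le_pow_left₀ (abs_nonneg _) (habs _ _) 2
    rw [sigma2hat, mul_inv_cancel_left₀ hm'.ne']
    exact le_ciSup hbdd l
  have hz0 : 0 ≤ zhat f S := Real.iSup_nonneg fun _ => abs_nonneg _
  have hs0 : 0 ≤ sigma2hat f S :=
    mul_nonneg (by positivity) (Real.iSup_nonneg fun _ => Finset.sum_nonneg fun _ _ => sq_nonneg _)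
  set z := zhat f S with hzdef
  set v := sigma2hat f S with hvdef
  set R := era f n m S with hRdef
  have hR : 0 < R := hε0.trans_le hε
  have hprob : IsProbabilityMeasure (radMeasure n m) := by
    unfold radMeasure; infer_instance
  have hV0 : 0 ≤ z * R + v := by positivity
  rcases hV0.eq_or_lt with hV | hV
  · -- If the denominator vanishes, division by zero makes the right-hand side `exp 0 = 1`.
    rw [← hV, mul_zero, div_zero, Real.exp_zero]
    exact measureReal_le_one
  set V := z * R + v with hVdef
  -- The minimizer of `-t ε + V t²`.
  set t := ε / (2 * V) with htdef
  have ht : 0 < t := by positivity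
  have htV : 2 * t * V = ε := by rw [htdef]; field_simp
  have htz : 2 * (t * z) * V ≤ z * R := by
    calc 2 * (t * z) * V = z * (2 * t * V) := by ring
      _ ≤ z * R := by rw [htV]; gcongr
  have htz1 : t * z < 1 := by
    by_contra hcon
    nlinarith
  have hEW : 𝔼 τ, rowSup f S τ = m * R := by
    rw [hRdef, era_eq_rowSup f n m hn S, mul_inv_cancel_left₀ hm'.ne']
  have hlap := laplace_lower m (rowSup f S) z (m * v) (m * V) t ht hz0 htz1
    -- `V (1 - t z)² ≥ V - 2 t z V ≥ V - z R`, which is the wimpy variance.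
    (by
      rw [mul_assoc]
      gcongr
      nlinarith [mul_nonneg hV0 (sq_nonneg (t * z))])
    (rowSup_sub_flip_le f S z hz) (sum_sq_rowSup_sub_flip_le f S z _ hz hs)
  rw [hEW] at hlap
  set A := {σ : Fin n → Fin m → Bool | R ≥ mcera f n m S σ + ε} with hA
  have hPA : (radMeasure n m A).toReal = 𝔼 σ, A.indicator 1 σ := by
    rw [← integral_radMeasure, integral_indicator_one A.toFinite.measurableSet]; rfl
  rw [hPA]
  -- Chernoff's bound, followed by independence of the rows.
  calc 𝔼 σ, A.indicator (1 : (Fin n → Fin m → Bool) → ℝ) σ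
      ≤ 𝔼 σ : Fin n → Fin m → Bool, Real.exp (t * (n * m * (R - ε))) *
          ∏ j, Real.exp (-t * rowSup f S (σ j)) := by
        refine Finset.expect_le_expect fun σ _ => ?_
        rw [← Real.exp_sum, ← Finset.mul_sum, ← Real.exp_add]
        by_cases hσ : σ ∈ A
        · rw [Set.indicator_of_mem hσ]
          apply Real.one_le_exp
          have h1 : R ≥ mcera f n m S σ + ε := hσ
          rw [mcera_eq_rowSup] at h1
          have h2 : ∑ j, rowSup f S (σ j) ≤ n * m * (R - ε) := by
            have h3 : (n : ℝ)⁻¹ * ((m : ℝ)⁻¹ * ∑ j, rowSup f S (σ j)) ≤ R - ε := by linarith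
            rw [inv_mul_le_iff₀ hn', inv_mul_le_iff₀ hm'] at h3
            linarith
          have := mul_le_mul_of_nonneg_left h2 ht.le
          linarith
        · rw [Set.indicator_of_notMem hσ]
          positivity
    _ = Real.exp (t * (n * m * (R - ε))) * (𝔼 τ, Real.exp (-t * rowSup f S τ)) ^ n := by
        rw [← Finset.mul_expect, expect_pi_prod fun _ τ => Real.exp (-t * rowSup f S τ)]
        simp
    _ ≤ Real.exp (t * (n * m * (R - ε))) * Real.exp (-t * (m * R) + m * V * t ^ 2) ^ n := by
        gcongr
    _ = Real.exp (-((n : ℝ) * (m : ℝ) * ε ^ 2) / (4 * V)) := by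
        rw [← Real.exp_nat_mul, ← Real.exp_add, htdef]
        congr 1
        field_simp
        ring
end
end

section
/- Let S = (s_1,…,s_m) be m i.i.d. samples from μ, let σ ∈ {−1,1}^{1×m} be a vector of m independent uniform Rademacher variables independent of S, and let δ ∈ (0,1). With probability at least 1 − δ (jointly over S and σ), R(F,m) ≤ R̂¹_m(F,S,σ) + sqrt( 2 ( 2 z R(F,m) + σ²_F ) ln(1/δ) / m ) + z ln(1/δ)/(8 m). -/
/-!
Divide the class by `z` and absorb the signs into it: `φ_l(x, σ) = σ f_l(x) / z` takes values in
`[-1, 1]`, and the pairs `(s_i, σ_i)` are i.i.d. (`measurePreserving_pairing`). The claim becomes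
a lower-tail bound for `Z = sup_l Σ_k φ_l(ω_k)`, proved by the entropy method. Write `Z_i` for the
supremum of the sums without the `i`-th term, `E` for the mean of `Z`, `s` for the largest second
moment of the `φ_l`, `v = 2 E + m s`, and `F(t) = E[e^{-tZ}]`.

Tensorization of entropy (`entropy_le_sum`), with `e^{-t Z_i}` as the comparison function in the
`i`-th coordinate, bounds the entropy of `e^{-tZ}` by terms in the increments `Z - Z_i`. These
satisfy `Z - Z_i ≤ 1` and `Σ_i (Z - Z_i) ≤ Z`, and each dominates, up to `ε`, a symmetric variable
`φ_l(ω_i)` in which `l` is a near-maximizer of `Z_i`. As `y ↦ (1 - t + y) e^{-y}` increases up to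
`y = t`, the elementary `two_point_bound` gives, for `t ≤ 1/2`,
`E_i[(1 - t + t (Z - Z_i)) e^{-t (Z - Z_i)}] ≥ 1 - t - b` with `b = s (t² / 2 + 5 t³ / 8)`
(`le_integral_increment`). Summing over `i` yields `t F' - (1 - t - b) F log F ≤ m b F`
(`laplace_diff_ineq`), which integrates to `log F ≤ -t E + v t² / 2 + m s t³ / 16`
(`log_le_of_diff_ineq`).

The Chernoff bound at `t = √(2 x / v)` gives `P(Z < E - √(2 v x) - x / 8) ≤ e^{-x}` whenever
this `t` is at most `1/2`; otherwise the threshold is not positive while `Z ≥ 0`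
(`lower_tail_supOn`).
-/

open MeasureTheory

noncomputable section

/-! ### Entropy on product spaces -/

open ProbabilityTheory

lemma integrable_of_abs_le {Ω : Type*} [MeasurableSpace Ω] {P : Measure Ω} [IsFiniteMeasure P]
    {g : Ω → ℝ} (hg : Measurable g) (K : ℝ) (hK : ∀ ω, |g ω| ≤ K) : Integrable g P :=
  Integrable.of_bound hg.aestronglyMeasurable K (ae_of_all _ hK)

/-- The Bregman divergence `e^G (G - H) - e^G + e^H ≥ 0` of `u log u`, written in terms of the
logarithms `G`, `H` of its two arguments. -/
def entDiv (G H : ℝ) : ℝ := Real.exp G * (G - H) - Real.exp G + Real.exp H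

lemma abs_entDiv_le {G H K : ℝ} (hG : |G| ≤ K) (hH : |H| ≤ K) :
    |entDiv G H| ≤ Real.exp K * (2 * K) + Real.exp K + Real.exp K := by
  have h1 : |Real.exp G| ≤ Real.exp K := by
    rw [abs_of_pos (Real.exp_pos _)]; exact Real.exp_le_exp.2 (le_of_abs_le hG)
  have h2 : |Real.exp H| ≤ Real.exp K := by
    rw [abs_of_pos (Real.exp_pos _)]; exact Real.exp_le_exp.2 (le_of_abs_le hH)
  have h3 : |G - H| ≤ 2 * K := (abs_sub _ _).trans (by linarith)
  unfold entDiv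
  calc _ ≤ |Real.exp G * (G - H)| + |Real.exp G| + |Real.exp H| :=
        (abs_add_le _ _).trans (by gcongr; exact abs_sub _ _)
    _ ≤ _ := by rw [abs_mul]; gcongr

lemma integrable_entDiv {Ω : Type*} [MeasurableSpace Ω] {P : Measure Ω} [IsFiniteMeasure P]
    {G H : Ω → ℝ} (hG : Measurable G) (hH : Measurable H) (K : ℝ) (hGK : ∀ ω, |G ω| ≤ K)
    (hHK : ∀ ω, |H ω| ≤ K) : Integrable (fun ω => entDiv (G ω) (H ω)) P := by
  refine integrable_of_abs_le ?_ _ (fun ω => abs_entDiv_le (hGK ω) (hHK ω))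
  unfold entDiv; fun_prop

lemma integrable_exp_of_abs_le {Ω : Type*} [MeasurableSpace Ω] {P : Measure Ω} [IsFiniteMeasure P]
    {G : Ω → ℝ} (hG : Measurable G) (K : ℝ) (hGK : ∀ ω, |G ω| ≤ K) :
    Integrable (fun ω => Real.exp (G ω)) P := by
  refine integrable_of_abs_le (by fun_prop) (Real.exp K) fun ω => ?_
  rw [abs_of_pos (Real.exp_pos _)]; exact Real.exp_le_exp.2 (le_of_abs_le (hGK ω))

lemma integral_exp_mem_Icc {Ω : Type*} [MeasurableSpace Ω] {P : Measure Ω}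
    [IsProbabilityMeasure P] {G : Ω → ℝ} (hG : Measurable G) (K : ℝ) (hGK : ∀ ω, |G ω| ≤ K) :
    ∫ ω, Real.exp (G ω) ∂P ∈ Set.Icc (Real.exp (-K)) (Real.exp K) := by
  have hi := integrable_exp_of_abs_le (P := P) hG K hGK
  constructor
  · have := integral_mono (integrable_const (μ := P) (Real.exp (-K))) hi
      (fun ω => Real.exp_le_exp.2 (neg_le_of_abs_le (hGK ω)))
    simpa using this
  · have := integral_mono hi (integrable_const (μ := P) (Real.exp K))
      (fun ω => Real.exp_le_exp.2 (le_of_abs_le (hGK ω)))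
    simpa using this

/-- The log-sum inequality: the divergence `entDiv` decreases under averaging. -/
lemma entDiv_log_integral_le {Ω : Type*} [MeasurableSpace Ω] {P : Measure Ω}
    [IsProbabilityMeasure P] {G H : Ω → ℝ} (hG : Measurable G) (hH : Measurable H) (K : ℝ)
    (hGK : ∀ ω, |G ω| ≤ K) (hHK : ∀ ω, |H ω| ≤ K) :
    entDiv (Real.log (∫ ω, Real.exp (G ω) ∂P)) (Real.log (∫ ω, Real.exp (H ω) ∂P)) ≤
      ∫ ω, entDiv (G ω) (H ω) ∂P := by
  set N := ∫ ω, Real.exp (G ω) ∂P with hN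
  set h := ∫ ω, Real.exp (H ω) ∂P with hh
  have hNpos : 0 < N := (Real.exp_pos _).trans_le (integral_exp_mem_Icc hG K hGK).1
  have hhpos : 0 < h := (Real.exp_pos _).trans_le (integral_exp_mem_Icc hH K hHK).1
  set r := Real.log N - Real.log h with hr
  have her : Real.exp r * h = N := by
    rw [hr, Real.exp_sub, Real.exp_log hNpos, Real.exp_log hhpos]; field_simp
  have iG := integrable_exp_of_abs_le (P := P) hG K hGK
  have iH := integrable_exp_of_abs_le (P := P) hH K hHK
  -- the tangent-line bound for `exp` at `H + r`, with `r` chosen so that the means agree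
  have key : ∀ ω, r * Real.exp (G ω) + (1 - Real.exp r) * Real.exp (H ω) ≤
      entDiv (G ω) (H ω) := by
    intro ω
    have h1 := Real.add_one_le_exp (H ω + r - G ω)
    have h2 : Real.exp (G ω) * Real.exp (H ω + r - G ω) = Real.exp r * Real.exp (H ω) := by
      rw [← Real.exp_add, ← Real.exp_add]; congr 1; ring
    have h3 := mul_le_mul_of_nonneg_left h1 (Real.exp_pos (G ω)).le
    rw [h2] at h3
    unfold entDiv
    linarith
  have := integral_mono ((iG.const_mul r).add (iH.const_mul (1 - Real.exp r)))
    (integrable_entDiv (P := P) hG hH K hGK hHK) key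
  rw [integral_add' (iG.const_mul r) (iH.const_mul (1 - Real.exp r)), integral_const_mul,
    integral_const_mul, ← hN, ← hh] at this
  unfold entDiv at *
  rw [Real.exp_log hNpos, Real.exp_log hhpos]
  linarith

lemma integral_pi_succ {Ω : Type*} [MeasurableSpace Ω] (ν : Measure Ω) [IsProbabilityMeasure ν]
    {n : ℕ} {u : (Fin (n + 1) → Ω) → ℝ}
    (hu : Integrable u (Measure.pi fun _ : Fin (n + 1) => ν)) :
    Integrable (fun x => ∫ y, u (Fin.cons x y) ∂(Measure.pi fun _ : Fin n => ν)) ν ∧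
    ∫ ω, u ω ∂(Measure.pi fun _ : Fin (n + 1) => ν) =
      ∫ x, ∫ y, u (Fin.cons x y) ∂(Measure.pi fun _ : Fin n => ν) ∂ν := by
  have hmp := (measurePreserving_piFinSuccAbove (fun _ : Fin (n + 1) => ν) 0).symm
  have he : ∀ p : Ω × (Fin n → Ω),
      (MeasurableEquiv.piFinSuccAbove (fun _ : Fin (n + 1) => Ω) 0).symm p =
        Fin.cons p.1 p.2 := by
    intro p
    simp [MeasurableEquiv.piFinSuccAbove, Fin.insertNthEquiv]
  have hi := (hmp.integrable_comp_emb (MeasurableEquiv.measurableEmbedding _)).2 hu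
  have hi' : Integrable (fun p : Ω × (Fin n → Ω) => u (Fin.cons p.1 p.2))
      (ν.prod (Measure.pi fun _ : Fin n => ν)) := by
    refine hi.congr (ae_of_all _ fun p => ?_)
    simp only [Function.comp, he]
  refine ⟨hi'.integral_prod_left, ?_⟩
  rw [← hmp.integral_comp', ← integral_prod _ hi']
  exact integral_congr_ae (ae_of_all _ fun p => by simp only [he])

lemma measurable_cons_pair {Ω : Type*} [MeasurableSpace Ω] {n : ℕ} :
    Measurable fun p : Ω × (Fin n → Ω) => (Fin.cons p.1 p.2 : Fin (n + 1) → Ω) := by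
  refine measurable_pi_iff.2 fun k => ?_
  refine Fin.cases ?_ (fun j => ?_) k
  · simpa using measurable_fst
  · simp only [Fin.cons_succ]; fun_prop

/-- Tensorization of entropy, combined with the variational formula for the entropy in each
coordinate: `H i` is an arbitrary comparison function that ignores the `i`-th coordinate. -/
lemma entropy_le_sum {Ω : Type*} [MeasurableSpace Ω] (ν : Measure Ω) [IsProbabilityMeasure ν]
    (K : ℝ) : ∀ (n : ℕ) (G : (Fin n → Ω) → ℝ) (H : Fin n → (Fin n → Ω) → ℝ),
    Measurable G → (∀ i, Measurable (H i)) → (∀ ω, |G ω| ≤ K) → (∀ i ω, |H i ω| ≤ K) →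
    (∀ i ω x, H i (Function.update ω i x) = H i ω) →
    ∫ ω, Real.exp (G ω) * G ω ∂(Measure.pi fun _ : Fin n => ν) -
      (∫ ω, Real.exp (G ω) ∂(Measure.pi fun _ : Fin n => ν)) *
        Real.log (∫ ω, Real.exp (G ω) ∂(Measure.pi fun _ : Fin n => ν)) ≤
      ∑ i, ∫ ω, entDiv (G ω) (H i ω) ∂(Measure.pi fun _ : Fin n => ν) := by
  intro n
  induction n with
  | zero =>
    intro G H _ _ _ _ _
    have hG : G = fun _ => G default := by
      funext ω; exact congrArg G (Subsingleton.elim _ _)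
    rw [hG]
    simp
  | succ n ih =>
    intro G H hG hH hGK hHK hup
    set P := Measure.pi fun _ : Fin n => ν with hP
    set Q := Measure.pi fun _ : Fin (n + 1) => ν with hQ
    have hGc : Measurable fun p : Ω × (Fin n → Ω) => G (Fin.cons p.1 p.2) :=
      hG.comp measurable_cons_pair
    have hGx : ∀ x, Measurable fun y : Fin n → Ω => G (Fin.cons x y) := fun x =>
      hGc.comp measurable_prodMk_left
    have hHx : ∀ i x, Measurable fun y : Fin n → Ω => H i (Fin.cons x y) := fun i x =>
      (hH i).comp (measurable_cons_pair.comp measurable_prodMk_left)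
    have iGG : Integrable (fun ω => Real.exp (G ω) * G ω) Q := by
      refine integrable_of_abs_le (by fun_prop) (Real.exp K * K) fun ω => ?_
      rw [abs_mul, abs_of_pos (Real.exp_pos _)]
      have := le_of_abs_le (hGK ω)
      gcongr
      exact hGK ω
    have iG : Integrable (fun ω => Real.exp (G ω)) Q := integrable_exp_of_abs_le hG K hGK
    have iD : ∀ i, Integrable (fun ω => entDiv (G ω) (H i ω)) Q := fun i =>
      integrable_entDiv hG (hH i) K hGK (hHK i)
    set N : Ω → ℝ := fun x => ∫ y, Real.exp (G (Fin.cons x y)) ∂P with hN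
    have hNmem : ∀ x, N x ∈ Set.Icc (Real.exp (-K)) (Real.exp K) := fun x =>
      integral_exp_mem_Icc (hGx x) K fun y => hGK _
    have hNpos : ∀ x, 0 < N x := fun x => (Real.exp_pos _).trans_le (hNmem x).1
    have hNmeas : Measurable N := by
      have : StronglyMeasurable fun p : Ω × (Fin n → Ω) => Real.exp (G (Fin.cons p.1 p.2)) :=
        (Real.measurable_exp.comp hGc).stronglyMeasurable
      exact this.integral_prod_right'.measurable
    have hNlog : ∀ x, |Real.log (N x)| ≤ K := fun x => by
      rw [abs_le]
      constructor
      · rw [Real.le_log_iff_exp_le (hNpos x)]; exact (hNmem x).1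
      · rw [Real.log_le_iff_le_exp (hNpos x)]; exact (hNmem x).2
    have iN : Integrable N ν := (integral_pi_succ ν iG).1
    have iNN : Integrable (fun x => N x * Real.log (N x)) ν := by
      refine integrable_of_abs_le (by fun_prop) (Real.exp K * K) fun x => ?_
      rw [abs_mul, abs_of_pos (hNpos x)]
      have := (hNmem x).2
      gcongr
      exact hNlog x
    have hM : ∫ ω, Real.exp (G ω) ∂Q = ∫ x, N x ∂ν := (integral_pi_succ ν iG).2
    -- the coordinates other than the first
    have hA : ∫ ω, Real.exp (G ω) * G ω ∂Q - ∫ x, N x * Real.log (N x) ∂ν ≤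
        ∑ i : Fin n, ∫ ω, entDiv (G ω) (H i.succ ω) ∂Q := by
      rw [(integral_pi_succ ν iGG).2, ← integral_sub (integral_pi_succ ν iGG).1 iNN]
      rw [Finset.sum_congr rfl fun (i : Fin n) _ => (integral_pi_succ ν (iD i.succ)).2]
      rw [← integral_finsetSum _ fun i _ => (integral_pi_succ ν (iD i.succ)).1]
      refine integral_mono ((integral_pi_succ ν iGG).1.sub iNN)
        (integrable_finsetSum _ fun i _ => (integral_pi_succ ν (iD i.succ)).1) fun x => ?_
      refine ih (fun y => G (Fin.cons x y)) (fun i y => H i.succ (Fin.cons x y)) (hGx x)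
        (fun i => hHx _ x) (fun y => hGK _) (fun i y => hHK _ _) fun i y z => ?_
      change H i.succ (Fin.cons x (Function.update y i z)) = H i.succ (Fin.cons x y)
      rw [Fin.cons_update, hup]
    -- the first coordinate, after averaging over the others
    have hB : ∫ x, N x * Real.log (N x) ∂ν - (∫ x, N x ∂ν) * Real.log (∫ x, N x ∂ν) ≤
        ∫ ω, entDiv (G ω) (H 0 ω) ∂Q := by
      obtain ⟨x₀⟩ : Nonempty Ω := nonempty_of_isProbabilityMeasure ν
      set h := ∫ y, Real.exp (H 0 (Fin.cons x₀ y)) ∂P with hh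
      have hhpos : 0 < h := (Real.exp_pos _).trans_le
        (integral_exp_mem_Icc (hHx 0 x₀) K fun y => hHK _ _).1
      have hH0 : ∀ x y, H 0 (Fin.cons x y) = H 0 (Fin.cons x₀ y) := fun x y => by
        rw [← hup 0 (Fin.cons x₀ y) x, Fin.update_cons_zero]
      have hpt : ∀ x, N x * Real.log (N x) - N x * (Real.log h + 1) + h ≤
          ∫ y, entDiv (G (Fin.cons x y)) (H 0 (Fin.cons x y)) ∂P := fun x => by
        have := entDiv_log_integral_le (P := P) (hGx x) (hHx 0 x) K (fun y => hGK _)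
          (fun y => hHK _ _)
        simp only [hH0 x] at this ⊢
        rw [← hh] at this
        change entDiv (Real.log (N x)) (Real.log h) ≤ _ at this
        unfold entDiv at this ⊢
        rw [Real.exp_log (hNpos x), Real.exp_log hhpos] at this
        linarith
      have hInt := integral_mono ((iNN.sub (iN.mul_const (Real.log h + 1))).add
        (integrable_const h)) (integral_pi_succ ν (iD 0)).1 hpt
      rw [← (integral_pi_succ ν (iD 0)).2, integral_add' (iNN.sub (iN.mul_const _))
        (integrable_const h), integral_sub' iNN (iN.mul_const _), integral_mul_const] at hInt
      have hMpos : 0 < ∫ x, N x ∂ν := by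
        rw [← hM]; exact (Real.exp_pos _).trans_le (integral_exp_mem_Icc hG K hGK).1
      have hlog := Real.log_le_sub_one_of_pos (div_pos hhpos hMpos)
      rw [Real.log_div hhpos.ne' hMpos.ne'] at hlog
      have h5 := mul_le_mul_of_nonneg_left hlog hMpos.le
      have h6 : (∫ x, N x ∂ν) * (h / (∫ x, N x ∂ν) - 1) = h - ∫ x, N x ∂ν := by
        field_simp
      rw [h6] at h5
      simp only [integral_const, probReal_univ, smul_eq_mul, one_mul] at hInt
      linarith
    rw [Fin.sum_univ_succ, hM]
    linarith

/-- Resampling one coordinate preserves the product measure. -/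
lemma integral_pi_update {Ω : Type*} [MeasurableSpace Ω] (ν : Measure Ω) [IsProbabilityMeasure ν]
    {n : ℕ} (i : Fin n) {u : (Fin n → Ω) → ℝ}
    (hu : Integrable u (Measure.pi fun _ : Fin n => ν)) :
    Integrable (fun ω => ∫ x, u (Function.update ω i x) ∂ν) (Measure.pi fun _ : Fin n => ν) ∧
    ∫ ω, u ω ∂(Measure.pi fun _ : Fin n => ν) =
      ∫ ω, ∫ x, u (Function.update ω i x) ∂ν ∂(Measure.pi fun _ : Fin n => ν) := by
  have hmeas : Measurable fun p : (Fin n → Ω) × Ω => Function.update p.1 i p.2 := by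
    refine measurable_pi_iff.2 fun k => ?_
    by_cases hk : k = i
    · subst hk; simpa using measurable_snd
    · simp only [Function.update_of_ne hk]; fun_prop
  have hmap : Measure.map (fun p : (Fin n → Ω) × Ω => Function.update p.1 i p.2)
      ((Measure.pi fun _ : Fin n => ν).prod ν) = Measure.pi fun _ : Fin n => ν := by
    refine (Measure.pi_eq fun s hs => ?_).symm
    rw [Measure.map_apply hmeas (MeasurableSet.univ_pi hs)]
    have : (fun p : (Fin n → Ω) × Ω => Function.update p.1 i p.2) ⁻¹' Set.univ.pi s =
        Set.univ.pi (Function.update s i Set.univ) ×ˢ s i := by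
      ext ⟨ω, x⟩
      simp only [Set.mem_preimage, Set.mem_pi, Set.mem_univ, true_imp_iff, Set.mem_prod]
      constructor
      · intro h
        refine ⟨fun k => ?_, by simpa using h i⟩
        by_cases hk : k = i
        · subst hk; simp
        · simpa [Function.update_of_ne hk] using h k
      · rintro ⟨h1, h2⟩ k
        by_cases hk : k = i
        · subst hk; simpa using h2
        · simpa [Function.update_of_ne hk] using h1 k
    rw [this, Measure.prod_prod, Measure.pi_pi, ← Finset.mul_prod_erase _ _ (Finset.mem_univ i),
      ← Finset.mul_prod_erase Finset.univ (fun k => ν (s k)) (Finset.mem_univ i)]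
    simp only [Function.update_self, measure_univ, one_mul]
    rw [mul_comm]
    congr 1
    refine Finset.prod_congr rfl fun k hk => ?_
    rw [Function.update_of_ne (Finset.ne_of_mem_erase hk)]
  have hu' := hu
  rw [← hmap] at hu'
  have hi : Integrable (fun p : (Fin n → Ω) × Ω => u (Function.update p.1 i p.2))
      ((Measure.pi fun _ : Fin n => ν).prod ν) := hu'.comp_measurable hmeas
  refine ⟨hi.integral_prod_left, ?_⟩
  rw [← integral_prod _ hi]
  conv_lhs => rw [← hmap]
  exact integral_map hmeas.aemeasurable hu'.aestronglyMeasurable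

/-! ### Suprema of sums and their increments -/

/-- `sup_l Σ_{k ∈ s} φ_l(ω_k)`, the supremum of the partial sums over the coordinates in `s`. -/
def supOn {Ω ι : Type*} (φ : ι → Ω → ℝ) {m : ℕ} (s : Finset (Fin m)) (ω : Fin m → Ω) : ℝ :=
  ⨆ l : ι, ∑ k ∈ s, φ l (ω k)

section SupOn

variable {Ω ι : Type*} {φ : ι → Ω → ℝ} {m : ℕ}

lemma sum_le_of_abs_le_one (h1 : ∀ l x, |φ l x| ≤ 1) (s : Finset (Fin m)) (ω : Fin m → Ω)
    (l : ι) : ∑ k ∈ s, φ l (ω k) ≤ m := by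
  calc ∑ k ∈ s, φ l (ω k) ≤ ∑ k ∈ s, (1 : ℝ) :=
        Finset.sum_le_sum fun k _ => le_of_abs_le (h1 l _)
    _ = (s.card : ℝ) := by simp
    _ ≤ m := by exact_mod_cast (Finset.card_le_univ s).trans (by simp)

lemma bddAbove_supOn (h1 : ∀ l x, |φ l x| ≤ 1) (s : Finset (Fin m)) (ω : Fin m → Ω) :
    BddAbove (Set.range fun l => ∑ k ∈ s, φ l (ω k)) :=
  ⟨m, by rintro _ ⟨l, rfl⟩; exact sum_le_of_abs_le_one h1 s ω l⟩

lemma le_supOn (h1 : ∀ l x, |φ l x| ≤ 1) (s : Finset (Fin m)) (ω : Fin m → Ω) (l : ι) :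
    ∑ k ∈ s, φ l (ω k) ≤ supOn φ s ω :=
  le_ciSup (bddAbove_supOn h1 s ω) l

lemma supOn_nonneg (h1 : ∀ l x, |φ l x| ≤ 1) (h0 : ∃ l₀, ∀ x, φ l₀ x = 0) (s : Finset (Fin m))
    (ω : Fin m → Ω) : 0 ≤ supOn φ s ω := by
  obtain ⟨l₀, hl⟩ := h0
  simpa [hl] using le_supOn h1 s ω l₀

lemma supOn_le (h1 : ∀ l x, |φ l x| ≤ 1) (s : Finset (Fin m)) (ω : Fin m → Ω) :
    supOn φ s ω ≤ m :=
  Real.iSup_le (sum_le_of_abs_le_one h1 s ω) (Nat.cast_nonneg m)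

lemma abs_supOn_le (h1 : ∀ l x, |φ l x| ≤ 1) (h0 : ∃ l₀, ∀ x, φ l₀ x = 0) (s : Finset (Fin m))
    (ω : Fin m → Ω) : |supOn φ s ω| ≤ m := by
  rw [abs_of_nonneg (supOn_nonneg h1 h0 s ω)]; exact supOn_le h1 s ω

lemma measurable_supOn [MeasurableSpace Ω] [Countable ι] (hm : ∀ l, Measurable (φ l))
    (s : Finset (Fin m)) : Measurable (supOn φ s) := by
  unfold supOn
  exact Measurable.iSup fun l => Finset.measurable_sum _ fun k _ =>
    (hm l).comp (measurable_pi_apply k)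

lemma supOn_univ_le_erase_add_one (h1 : ∀ l x, |φ l x| ≤ 1) (h0 : ∃ l₀, ∀ x, φ l₀ x = 0)
    (i : Fin m) (ω : Fin m → Ω) :
    supOn φ Finset.univ ω ≤ supOn φ (Finset.univ.erase i) ω + 1 := by
  refine Real.iSup_le (fun l => ?_) (by linarith [supOn_nonneg h1 h0 (Finset.univ.erase i) ω])
  rw [← Finset.sum_erase_add _ _ (Finset.mem_univ i)]
  exact add_le_add (le_supOn h1 _ ω l) (le_of_abs_le (h1 l _))

lemma supOn_erase_update (i : Fin m) (ω : Fin m → Ω) (x : Ω) :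
    supOn φ (Finset.univ.erase i) (Function.update ω i x) = supOn φ (Finset.univ.erase i) ω := by
  unfold supOn
  congr 1; funext l
  refine Finset.sum_congr rfl fun k hk => ?_
  rw [Function.update_of_ne (Finset.ne_of_mem_erase hk)]

/-- The self-bounding property of the supremum `Z`: its increments satisfy `Σ_i (Z - Z_i) ≤ Z`. -/
lemma sum_sub_supOn_erase_le (h1 : ∀ l x, |φ l x| ≤ 1) (h0 : ∃ l₀, ∀ x, φ l₀ x = 0)
    (ω : Fin m → Ω) :
    ∑ i, (supOn φ Finset.univ ω - supOn φ (Finset.univ.erase i) ω) ≤ supOn φ Finset.univ ω := by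
  rcases Nat.eq_zero_or_pos m with rfl | hmpos
  · simpa using supOn_nonneg h1 h0 Finset.univ ω
  have hm1 : (1 : ℝ) ≤ m := by exact_mod_cast hmpos
  have hl : ∀ l, (m - 1 : ℝ) * ∑ k, φ l (ω k) ≤ ∑ i, supOn φ (Finset.univ.erase i) ω := by
    intro l
    calc (m - 1 : ℝ) * ∑ k, φ l (ω k) = ∑ i, (∑ k, φ l (ω k) - φ l (ω i)) := by
          rw [Finset.sum_sub_distrib]; simp; ring
      _ = ∑ i, ∑ k ∈ Finset.univ.erase i, φ l (ω k) := by
          refine Finset.sum_congr rfl fun i _ => ?_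
          rw [← Finset.sum_erase_add _ _ (Finset.mem_univ i)]; ring
      _ ≤ _ := Finset.sum_le_sum fun i _ => le_supOn h1 _ ω l
  have : (m - 1 : ℝ) * supOn φ Finset.univ ω ≤ ∑ i, supOn φ (Finset.univ.erase i) ω := by
    unfold supOn at hl ⊢
    rw [Real.mul_iSup_of_nonneg (by linarith)]
    exact Real.iSup_le hl (Finset.sum_nonneg fun i _ => supOn_nonneg h1 h0 _ ω)
  rw [Finset.sum_sub_distrib]
  simp only [Finset.sum_const, Finset.card_univ, Fintype.card_fin, nsmul_eq_mul]
  linarith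

end SupOn

/-- `s ↦ (1 - t + s) e^{-s}` is nondecreasing on `(-∞, t]`. -/
lemma mul_exp_neg_mono {t s s' : ℝ} (hs : s ≤ s') (hs' : s' ≤ t) :
    (1 - t + s) * Real.exp (-s) ≤ (1 - t + s') * Real.exp (-s') := by
  have h1 : Real.exp (-s') = Real.exp (-s) * Real.exp (-(s' - s)) := by
    rw [← Real.exp_add]; congr 1; ring
  have h2 : 1 - t + s ≤ (1 - t + s') * Real.exp (-(s' - s)) := by
    rcases le_total 0 (1 - t + s') with h | h
    · have h3 := Real.add_one_le_exp (-(s' - s))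
      nlinarith [mul_le_mul_of_nonneg_left h3 h]
    · have h3 : Real.exp (-(s' - s)) ≤ 1 := Real.exp_le_one_iff.2 (by linarith)
      nlinarith
  rw [h1]
  have := mul_le_mul_of_nonneg_right h2 (Real.exp_pos (-s)).le
  linarith

lemma mul_exp_neg_shift {t s ε : ℝ} (hs : 0 ≤ 1 - t + s) (hs2 : -1 ≤ s) (hε : 0 ≤ ε)
    (hε1 : ε ≤ 1) :
    (1 - t + s) * Real.exp (-s) - ε * Real.exp 2 ≤
      (1 - t + (s - ε)) * Real.exp (-(s - ε)) := by
  have h1 : Real.exp (-s) ≤ Real.exp (-(s - ε)) := Real.exp_le_exp.2 (by linarith)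
  have h2 : Real.exp (-(s - ε)) ≤ Real.exp 2 := Real.exp_le_exp.2 (by linarith)
  nlinarith [mul_le_mul_of_nonneg_left h1 hs, mul_le_mul_of_nonneg_left h2 hε]

/-- A lower bound for the increment `Z - Z_i` in the `i`-th coordinate, the others being frozen:
`Z - Z_i` dominates `φ_l(x)` up to `ε` when `l` is a near-maximizer of `Z_i`, and such an `l` does
not depend on `x`, so that a bound valid for each single `φ_l` carries over. -/
lemma le_integral_increment {Ω ι : Type*} [MeasurableSpace Ω] [Countable ι] {φ : ι → Ω → ℝ}
    {m : ℕ} (hφ : ∀ l, Measurable (φ l)) (h1 : ∀ l x, |φ l x| ≤ 1)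
    (h0 : ∃ l₀, ∀ x, φ l₀ x = 0) (ν : Measure Ω) [IsProbabilityMeasure ν] {t c : ℝ} (ht0 : 0 ≤ t)
    (ht : t ≤ 1 / 2)
    (hc : ∀ l, c ≤ ∫ x, (1 - t + t * φ l x) * Real.exp (-(t * φ l x)) ∂ν)
    (i : Fin m) (ω : Fin m → Ω) :
    c ≤ ∫ x, (1 - t + t * (supOn φ Finset.univ (Function.update ω i x) -
      supOn φ (Finset.univ.erase i) ω)) * Real.exp (-(t * (supOn φ Finset.univ
        (Function.update ω i x) - supOn φ (Finset.univ.erase i) ω))) ∂ν := by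
  obtain ⟨l₀, hl₀⟩ := h0
  have : Nonempty ι := ⟨l₀⟩
  have hZmeas : Measurable fun x => supOn φ Finset.univ (Function.update ω i x) :=
    (measurable_supOn hφ _).comp (measurable_update ω)
  set z := supOn φ (Finset.univ.erase i) ω with hz
  set Z := fun x => supOn φ Finset.univ (Function.update ω i x) with hZ
  have hd1 : ∀ x, Z x - z ≤ 1 := fun x => by
    have := supOn_univ_le_erase_add_one h1 ⟨l₀, hl₀⟩ i (Function.update ω i x)
    rw [supOn_erase_update] at this
    simp only [hZ, hz]; linarith
  have hdm : ∀ x, |Z x - z| ≤ 2 * m := fun x => by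
    refine (abs_sub _ _).trans ?_
    have h2 := abs_supOn_le h1 ⟨l₀, hl₀⟩ Finset.univ (Function.update ω i x)
    have h3 := abs_supOn_le h1 ⟨l₀, hl₀⟩ (Finset.univ.erase i) ω
    simp only [hZ, hz]; linarith
  have intg : ∀ (u : Ω → ℝ) (K : ℝ), Measurable u → (∀ x, |u x| ≤ K) →
      Integrable (fun x => (1 - t + t * u x) * Real.exp (-(t * u x))) ν := by
    intro u K hu hK
    refine integrable_of_abs_le (by fun_prop) ((1 + K) * Real.exp K) fun x => ?_
    have hK0 : 0 ≤ K := (abs_nonneg _).trans (hK x)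
    have htu : |t * u x| ≤ K := by
      rw [abs_mul, abs_of_nonneg ht0]
      nlinarith [hK x, abs_nonneg (u x)]
    rw [abs_mul, abs_of_pos (Real.exp_pos _)]
    have h2 : |1 - t + t * u x| ≤ 1 + K := by
      rw [abs_le] at htu ⊢
      constructor <;> linarith
    have h3 : -(t * u x) ≤ K := by linarith [neg_le_of_abs_le htu]
    gcongr
  refine le_of_forall_pos_le_add fun η hη => ?_
  set ε := min 1 (η / Real.exp 2) with hε
  have hεpos : 0 < ε := lt_min one_pos (div_pos hη (Real.exp_pos _))
  have hεη : ε * Real.exp 2 ≤ η := by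
    have := min_le_right 1 (η / Real.exp 2)
    rwa [le_div_iff₀ (Real.exp_pos _)] at this
  obtain ⟨l, hl⟩ : ∃ l, z - ε < ∑ k ∈ Finset.univ.erase i, φ l (ω k) :=
    exists_lt_of_lt_ciSup (show z - ε < ⨆ l, ∑ k ∈ Finset.univ.erase i, φ l (ω k) by
      change z - ε < z; linarith)
  have hd : ∀ x, φ l x - ε ≤ Z x - z := fun x => by
    have h2 := le_supOn h1 Finset.univ (Function.update ω i x) l
    rw [← Finset.sum_erase_add _ _ (Finset.mem_univ i), Function.update_self] at h2
    have h3 : ∑ k ∈ Finset.univ.erase i, φ l (Function.update ω i x k) =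
        ∑ k ∈ Finset.univ.erase i, φ l (ω k) :=
      Finset.sum_congr rfl fun k hk => by
        rw [Function.update_of_ne (Finset.ne_of_mem_erase hk)]
    simp only [hZ]; linarith
  have hpt : ∀ x, (1 - t + t * φ l x) * Real.exp (-(t * φ l x)) - η ≤
      (1 - t + t * (Z x - z)) * Real.exp (-(t * (Z x - z))) := fun x => by
    have hb := abs_le.1 (h1 l x)
    have h2 := mul_exp_neg_shift (t := t) (s := t * φ l x) (ε := ε) (by nlinarith)
      (by nlinarith) hεpos.le (min_le_left _ _)
    have h3 := mul_exp_neg_mono (t := t) (s := t * φ l x - ε) (s' := t * (Z x - z))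
      (by nlinarith [mul_le_mul_of_nonneg_left (hd x) ht0]) (by nlinarith [hd1 x])
    linarith
  have hInt := integral_mono ((intg (φ l) 1 (hφ l) (h1 l)).sub (integrable_const η))
    (intg (fun x => Z x - z) (2 * m) (hZmeas.sub_const z) hdm) hpt
  rw [integral_sub' (intg (φ l) 1 (hφ l) (h1 l)) (integrable_const η)] at hInt
  simp only [integral_const, probReal_univ, smul_eq_mul, one_mul] at hInt
  linarith [hc l]

/-- The differential inequality for the Laplace transform `F(t) = E[e^{-tZ}]`:
`t F' - (1 - t - b) F log F ≤ m b F`. -/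
lemma laplace_diff_ineq {Ω ι : Type*} [MeasurableSpace Ω] [Countable ι] {φ : ι → Ω → ℝ}
    {m : ℕ} (hφ : ∀ l, Measurable (φ l)) (h1 : ∀ l x, |φ l x| ≤ 1)
    (h0 : ∃ l₀, ∀ x, φ l₀ x = 0) (ν : Measure Ω) [IsProbabilityMeasure ν] {t b : ℝ} (ht0 : 0 ≤ t)
    (ht : t ≤ 1 / 2) (hb0 : 0 ≤ b) (hb : 0 ≤ 1 - t - b)
    (hc : ∀ l, 1 - t - b ≤ ∫ x, (1 - t + t * φ l x) * Real.exp (-(t * φ l x)) ∂ν)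
    (P : Measure (Fin m → Ω)) (hP : P = Measure.pi fun _ : Fin m => ν)
    (F F' : ℝ) (hF : F = ∫ ω, Real.exp (t * -supOn φ Finset.univ ω) ∂P)
    (hF' : F' = ∫ ω, -supOn φ Finset.univ ω * Real.exp (t * -supOn φ Finset.univ ω) ∂P) :
    t * F' - (1 - t - b) * (F * Real.log F) ≤ m * b * F := by
  have hPp : IsProbabilityMeasure P := by rw [hP]; infer_instance
  set Z : (Fin m → Ω) → ℝ := supOn φ Finset.univ with hZ
  set Y : Fin m → (Fin m → Ω) → ℝ := fun i => supOn φ (Finset.univ.erase i) with hY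
  have mZ : Measurable Z := measurable_supOn hφ _
  have mY : ∀ i, Measurable (Y i) := fun i => measurable_supOn hφ _
  have bZ : ∀ ω, |Z ω| ≤ m := abs_supOn_le h1 h0 _
  have bY : ∀ i ω, |Y i ω| ≤ m := fun i => abs_supOn_le h1 h0 _
  have tb : ∀ u : ℝ, |u| ≤ m → |t * -u| ≤ m := fun u hu => by
    rw [abs_mul, abs_of_nonneg ht0, abs_neg]; nlinarith [abs_nonneg u]
  have iE : Integrable (fun ω => Real.exp (t * -Z ω)) P :=
    integrable_exp_of_abs_le (by fun_prop) m fun ω => tb _ (bZ ω)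
  have iEu : ∀ (u : (Fin m → Ω) → ℝ) (K : ℝ), Measurable u → (∀ ω, |u ω| ≤ K) →
      Integrable (fun ω => u ω * Real.exp (t * -Z ω)) P := fun u K mu hu =>
    iE.bdd_mul mu.aestronglyMeasurable (ae_of_all _ hu)
  have iY : ∀ i, Integrable (fun ω => Real.exp (t * -Y i ω)) P := fun i =>
    integrable_exp_of_abs_le (by have := mY i; fun_prop) m fun ω => tb _ (bY i ω)
  have iZE := iEu Z m mZ bZ
  have iYE := fun i => iEu (Y i) m (mY i) (bY i)
  have hent := entropy_le_sum ν m m (fun ω => t * -Z ω) (fun i ω => t * -Y i ω)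
    (by fun_prop) (fun i => by have := mY i; fun_prop) (fun ω => tb _ (bZ ω))
    (fun i ω => tb _ (bY i ω)) (fun i ω x => by simp only [hY, supOn_erase_update])
  rw [← hP, ← hF] at hent
  have hF2 : F' = -∫ ω, Z ω * Real.exp (t * -Z ω) ∂P := by
    rw [hF', ← integral_neg]; simp only [neg_mul]
  have e1 : ∫ ω, Real.exp (t * -Z ω) * (t * -Z ω) ∂P = t * F' := by
    rw [hF', ← integral_const_mul]; congr 1; funext ω; ring
  rw [e1] at hent
  have hresample : ∀ i, (1 - t - b) * ∫ ω, Real.exp (t * -Y i ω) ∂P ≤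
      ∫ ω, (1 - t + t * (Z ω - Y i ω)) * Real.exp (t * -Z ω) ∂P := by
    intro i
    have iu : Integrable (fun ω => (1 - t + t * (Z ω - Y i ω)) * Real.exp (t * -Z ω)) P := by
      refine (((iE.const_mul (1 - t)).add (iZE.const_mul t)).sub ((iYE i).const_mul t)).congr
        (ae_of_all _ fun ω => ?_)
      simp only [Pi.add_apply, Pi.sub_apply]; ring
    have hup := integral_pi_update ν i (hP ▸ iu)
    rw [← hP] at hup
    rw [hup.2, ← integral_const_mul]
    refine integral_mono ((iY i).const_mul _) hup.1 fun ω => ?_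
    have hinc := le_integral_increment hφ h1 h0 ν ht0 ht hc i ω
    have := mul_le_mul_of_nonneg_right hinc (Real.exp_pos (t * -Y i ω)).le
    refine this.trans (le_of_eq ?_)
    rw [← integral_mul_const]
    congr 1; funext x
    simp only [hY, hZ, supOn_erase_update]
    rw [mul_assoc, ← Real.exp_add]
    congr 2; ring
  have hi : ∀ i, (1 - t - b) * ∫ ω, entDiv (t * -Z ω) (t * -Y i ω) ∂P ≤
      ∫ ω, (b + (t + b) * t * (Z ω - Y i ω)) * Real.exp (t * -Z ω) ∂P := by
    intro i
    have e2 : ∫ ω, entDiv (t * -Z ω) (t * -Y i ω) ∂P =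
        -t * ∫ ω, Z ω * Real.exp (t * -Z ω) ∂P + t * ∫ ω, Y i ω * Real.exp (t * -Z ω) ∂P
          - F + ∫ ω, Real.exp (t * -Y i ω) ∂P := by
      rw [hF, ← integral_const_mul, ← integral_const_mul, ← integral_add, ← integral_sub,
        ← integral_add]
      · congr 1; funext ω; unfold entDiv; ring
      · exact ((iZE.const_mul (-t)).add ((iYE i).const_mul t)).sub iE
      · exact iY i
      · exact (iZE.const_mul (-t)).add ((iYE i).const_mul t)
      · exact iE
      · exact iZE.const_mul (-t)
      · exact (iYE i).const_mul t
    have e3 : ∀ p q : ℝ, ∫ ω, (p + q * (Z ω - Y i ω)) * Real.exp (t * -Z ω) ∂P =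
        p * F + q * ∫ ω, Z ω * Real.exp (t * -Z ω) ∂P
          - q * ∫ ω, Y i ω * Real.exp (t * -Z ω) ∂P := by
      intro p q
      rw [hF, ← integral_const_mul, ← integral_const_mul, ← integral_const_mul, ← integral_add,
        ← integral_sub]
      · congr 1; funext ω; ring
      · exact (iE.const_mul p).add (iZE.const_mul q)
      · exact (iYE i).const_mul q
      · exact iE.const_mul p
      · exact iZE.const_mul q
    have h2 := hresample i
    rw [e3] at h2 ⊢
    rw [e2]
    linarith
  have iS : ∀ i, Integrable
      (fun ω => (b + (t + b) * t * (Z ω - Y i ω)) * Real.exp (t * -Z ω)) P := fun i => by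
    refine (((iE.const_mul b).add (iZE.const_mul ((t + b) * t))).sub
      ((iYE i).const_mul ((t + b) * t))).congr (ae_of_all _ fun ω => ?_)
    simp only [Pi.add_apply, Pi.sub_apply]; ring
  have hsum : ∑ i, ∫ ω, (b + (t + b) * t * (Z ω - Y i ω)) * Real.exp (t * -Z ω) ∂P ≤
      m * b * F - (t + b) * t * F' := by
    rw [← integral_finsetSum _ fun i _ => iS i]
    have e4 : m * b * F - (t + b) * t * F' =
        ∫ ω, (m * b * Real.exp (t * -Z ω) + (t + b) * t * (Z ω * Real.exp (t * -Z ω))) ∂P := by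
      rw [integral_add (iE.const_mul _) (iZE.const_mul _), integral_const_mul,
        integral_const_mul, hF2, hF]; ring
    rw [e4]
    refine integral_mono (integrable_finsetSum _ fun i _ => iS i)
      ((iE.const_mul _).add (iZE.const_mul _)) fun ω => ?_
    simp only [← Finset.sum_mul, Finset.sum_add_distrib, ← Finset.mul_sum, Finset.sum_const,
      Finset.card_univ, Fintype.card_fin, nsmul_eq_mul]
    have h2 := sum_sub_supOn_erase_le h1 h0 ω
    have h3 : 0 ≤ (t + b) * t := by positivity
    have h4 := mul_le_mul_of_nonneg_right (mul_le_mul_of_nonneg_left h2 h3)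
      (Real.exp_pos (t * -Z ω)).le
    simp only [hY, hZ] at h4 ⊢
    linarith
  have h5 := mul_le_mul_of_nonneg_left hent hb
  rw [Finset.mul_sum] at h5
  have h6 := h5.trans (Finset.sum_le_sum fun i _ => hi i)
  linarith

/-! ### From the differential inequality to the lower tail -/

/-- Integration of the differential inequality. The right-hand side is a supersolution: after
multiplying `u / t`, the rescaled difference of the two sides, by the integrating factor
`exp (t + s (t² / 4 + 5 t³ / 24))` one gets a nonincreasing function that vanishes at `0⁺`. -/
lemma log_le_of_diff_ineq {F F' : ℝ → ℝ} {E s M : ℝ} (hE : 0 ≤ E) (hs0 : 0 ≤ s) (hs1 : s ≤ 1)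
    (hM : 0 ≤ M) (hF : ∀ t, HasDerivAt F (F' t) t) (hpos : ∀ t, 0 < F t) (hF0 : F 0 = 1)
    (hF'0 : F' 0 = -E)
    (hode : ∀ t, 0 < t → t ≤ 1 / 2 →
      t * F' t - (1 - t - s * (t ^ 2 / 2 + 5 * t ^ 3 / 8)) * (F t * Real.log (F t)) ≤
        M * (s * (t ^ 2 / 2 + 5 * t ^ 3 / 8)) * F t)
    {t : ℝ} (ht0 : 0 < t) (ht : t ≤ 1 / 2) :
    Real.log (F t) ≤ -t * E + E * t ^ 2 + M * s * (t ^ 2 / 2 + t ^ 3 / 16) := by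
  set u : ℝ → ℝ := fun t =>
    Real.log (F t) + t * E - E * t ^ 2 - M * s * (t ^ 2 / 2 + t ^ 3 / 16) with hu
  set u' : ℝ → ℝ := fun t =>
    F' t / F t + E - E * (2 * t) - M * s * (t + 3 * t ^ 2 / 16) with hu'
  set q : ℝ → ℝ := fun t => t + s * (t ^ 2 / 4 + 5 * t ^ 3 / 24) with hq
  have du : ∀ t, HasDerivAt u (u' t) t := fun t => by
    have h1 := (hF t).log (hpos t).ne'
    have h2 : HasDerivAt (fun t : ℝ => t * E) (1 * E) t := (hasDerivAt_id t).mul_const E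
    have h3 : HasDerivAt (fun t : ℝ => E * t ^ 2) (E * (2 * t)) t := by
      simpa using (hasDerivAt_pow 2 t).const_mul E
    have h4 : HasDerivAt (fun t : ℝ => M * s * (t ^ 2 / 2 + t ^ 3 / 16))
        (M * s * (t + 3 * t ^ 2 / 16)) t := by
      have := (((hasDerivAt_pow 2 t).div_const 2).add ((hasDerivAt_pow 3 t).div_const 16)).const_mul
        (M * s)
      convert! this using 1
      norm_num
    have := ((h1.add h2).sub h3).sub h4
    rw [one_mul] at this
    exact this
  have dq : ∀ t, HasDerivAt q (1 + s * (t / 2 + 5 * t ^ 2 / 8)) t := fun t => by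
    have := (hasDerivAt_id t).add ((((hasDerivAt_pow 2 t).div_const 4).add
      (((hasDerivAt_pow 3 t).const_mul 5).div_const 24)).const_mul s)
    convert! this using 1
    norm_num
    left; ring
  have hu0 : u 0 = 0 := by simp [hu, hF0]
  have hlim : Filter.Tendsto (fun t => Real.exp (q t) * (u t / t)) (nhdsWithin 0 (Set.Ioi 0))
      (nhds 0) := by
    have h1 : Filter.Tendsto (fun t => u t / t) (nhdsWithin 0 (Set.Ioi 0)) (nhds 0) := by
      have h2 := (hasDerivAt_iff_tendsto_slope.1 (du 0)).mono_left
        (nhdsWithin_mono 0 (fun x (hx : 0 < x) => hx.ne' : Set.Ioi (0 : ℝ) ⊆ {0}ᶜ))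
      have h3 : u' 0 = 0 := by simp [hu', hF0, hF'0]
      rw [h3] at h2
      refine h2.congr fun x => ?_
      simp [slope_def_field, hu0]
    have h4 : Filter.Tendsto (fun t => Real.exp (q t)) (nhdsWithin 0 (Set.Ioi 0))
        (nhds (Real.exp (q 0))) :=
      ((Real.continuous_exp.continuousAt.comp (dq 0).continuousAt).tendsto).mono_left
        nhdsWithin_le_nhds
    simpa using h4.mul h1
  have hanti : AntitoneOn (fun t => Real.exp (q t) * (u t / t)) (Set.Ioc 0 (1 / 2)) := by
    have dy : ∀ x, 0 < x → HasDerivAt (fun t => Real.exp (q t) * (u t / t))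
        (Real.exp (q x) * (1 + s * (x / 2 + 5 * x ^ 2 / 8)) * (u x / x) +
          Real.exp (q x) * ((u' x * x - u x * 1) / x ^ 2)) x := fun x hx =>
      (dq x).exp.mul ((du x).div (hasDerivAt_id x) hx.ne')
    refine antitoneOn_of_deriv_nonpos (convex_Ioc 0 (1 / 2))
      (fun x hx => (dy x hx.1).continuousAt.continuousWithinAt)
      (fun x hx => ?_) (fun x hx => ?_)
    · rw [interior_Ioc] at hx
      exact (dy x hx.1).differentiableAt.differentiableWithinAt
    · rw [interior_Ioc] at hx
      obtain ⟨hx0, hx1⟩ := hx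
      rw [(dy x hx0).deriv]
      set b := s * (x ^ 2 / 2 + 5 * x ^ 3 / 8) with hb
      have e1 : Real.exp (q x) * (1 + s * (x / 2 + 5 * x ^ 2 / 8)) * (u x / x) +
          Real.exp (q x) * ((u' x * x - u x * 1) / x ^ 2) =
          Real.exp (q x) / x ^ 2 * (x * u' x - (1 - x - b) * u x) := by
        rw [hb]; field_simp; ring
      rw [e1]
      refine mul_nonpos_of_nonneg_of_nonpos (by positivity) ?_
      have h1 : x * (F' x / F x) - (1 - x - b) * Real.log (F x) ≤ M * b := by
        have h2 := hode x hx0 hx1.le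
        rw [← hb] at h2
        have h3 : x * (F' x / F x) - (1 - x - b) * Real.log (F x) =
            (x * F' x - (1 - x - b) * (F x * Real.log (F x))) / F x := by
          have := (hpos x).ne'
          field_simp
        rw [h3, div_le_iff₀ (hpos x)]
        exact h2
      have hb0 : 0 ≤ b := by positivity
      have hbx : b * (1 - x) ≤ x ^ 2 := by
        have h4 : (x ^ 2 / 2 + 5 * x ^ 3 / 8) * (1 - x) ≤ x ^ 2 := by
          have : 0 ≤ x ^ 2 * (1 / 2 - x / 8 + 5 * x ^ 2 / 8) :=
            mul_nonneg (sq_nonneg x) (by nlinarith)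
          nlinarith
        have h5 : 0 ≤ (x ^ 2 / 2 + 5 * x ^ 3 / 8) * (1 - x) :=
          mul_nonneg (by positivity) (by linarith)
        calc b * (1 - x) = s * ((x ^ 2 / 2 + 5 * x ^ 3 / 8) * (1 - x)) := by rw [hb]; ring
          _ ≤ 1 * ((x ^ 2 / 2 + 5 * x ^ 3 / 8) * (1 - x)) := by gcongr
          _ ≤ x ^ 2 := by linarith
      have h6 : 0 ≤ E * x * (x ^ 2 - b * (1 - x)) :=
        mul_nonneg (mul_nonneg hE hx0.le) (by linarith)
      have h7 : 0 ≤ M * s * (x ^ 4 / 16 + b * (x ^ 2 / 2 + x ^ 3 / 16)) := by positivity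
      have e2 : x * u' x - (1 - x - b) * u x =
          (x * (F' x / F x) - (1 - x - b) * Real.log (F x) - M * b) -
            E * x * (x ^ 2 - b * (1 - x)) -
            M * s * (x ^ 4 / 16 + b * (x ^ 2 / 2 + x ^ 3 / 16)) +
            (M * b - M * (s * (x ^ 2 / 2 + 5 * x ^ 3 / 8))) := by
        simp only [hu, hu']; ring
      rw [e2, ← hb]
      linarith
  have hle : Real.exp (q t) * (u t / t) ≤ 0 := by
    refine ge_of_tendsto hlim ?_
    filter_upwards [Ioc_mem_nhdsGT ht0] with x hx
    exact hanti ⟨hx.1, hx.2.trans ht⟩ ⟨ht0, ht⟩ hx.2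
  have hut : u t ≤ 0 := by
    by_contra hcon
    push Not at hcon
    have : 0 < Real.exp (q t) * (u t / t) := mul_pos (Real.exp_pos _) (div_pos hcon ht0)
    linarith
  simp only [hu] at hut
  linarith

/-- The lower-tail concentration inequality for the supremum `Z` of sums of i.i.d. terms, with
variance factor `2 E[Z] + m s`. The number `s` plays the role of the largest second moment
of the class, and enters only through the bound `hc`. -/
lemma lower_tail_supOn {Ω ι : Type*} [MeasurableSpace Ω] [Countable ι] {φ : ι → Ω → ℝ}
    {m : ℕ} (hφ : ∀ l, Measurable (φ l)) (h1 : ∀ l x, |φ l x| ≤ 1)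
    (h0 : ∃ l₀, ∀ x, φ l₀ x = 0) (ν : Measure Ω) [IsProbabilityMeasure ν] {s : ℝ} (hs0 : 0 ≤ s)
    (hs1 : s ≤ 1)
    (hc : ∀ t, 0 < t → t ≤ 1 / 2 → ∀ l, 1 - t - s * (t ^ 2 / 2 + 5 * t ^ 3 / 8) ≤
      ∫ x, (1 - t + t * φ l x) * Real.exp (-(t * φ l x)) ∂ν)
    (P : Measure (Fin m → Ω)) (hP : P = Measure.pi fun _ : Fin m => ν)
    (E : ℝ) (hE : E = ∫ ω, supOn φ Finset.univ ω ∂P) {x : ℝ} (hx : 0 < x) :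
    P.real {ω | supOn φ Finset.univ ω <
      E - (Real.sqrt (2 * (2 * E + m * s) * x) + x / 8)} ≤ Real.exp (-x) := by
  have hPp : IsProbabilityMeasure P := by rw [hP]; infer_instance
  have hE0 : 0 ≤ E := by rw [hE]; exact integral_nonneg fun ω => supOn_nonneg h1 h0 _ ω
  have hms : 0 ≤ (m : ℝ) * s := by positivity
  set v := 2 * E + m * s with hv
  set X : (Fin m → Ω) → ℝ := fun ω => -supOn φ Finset.univ ω with hX
  have mX : Measurable X := (measurable_supOn hφ _).neg
  have bX : ∀ ω, |X ω| ≤ m := fun ω => by rw [hX, abs_neg]; exact abs_supOn_le h1 h0 _ ω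
  have iX : ∀ t, Integrable (fun ω => Real.exp (t * X ω)) P := fun t =>
    integrable_exp_of_abs_le (by fun_prop) (|t| * m) fun ω => by
      rw [abs_mul]; gcongr; exact bX ω
  rcases le_or_gt v (8 * x) with hvx | hvx
  · -- the threshold is not positive, while `Z ≥ 0`
    have hsq : v / 2 ≤ Real.sqrt (2 * v * x) :=
      Real.le_sqrt_of_sq_le (by nlinarith)
    have hempty : {ω : Fin m → Ω | supOn φ Finset.univ ω < E - (Real.sqrt (2 * v * x) + x / 8)} = ∅ := by
      ext ω
      simp only [Set.mem_ofPred_eq, Set.mem_empty_iff_false, iff_false, not_lt]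
      have := supOn_nonneg h1 h0 Finset.univ ω
      linarith
    rw [hempty]
    simpa using (Real.exp_pos (-x)).le
  · have hvpos : 0 < v := by linarith
    set t := Real.sqrt (2 * x / v) with ht
    have htsq : t ^ 2 * v = 2 * x := by
      rw [ht, Real.sq_sqrt (by positivity)]; field_simp
    have ht0 : 0 < t := Real.sqrt_pos.2 (by positivity)
    have ht2 : t ≤ 1 / 2 := by
      rw [ht, Real.sqrt_le_left (by norm_num), div_le_iff₀ hvpos]; linarith
    have htr : t * Real.sqrt (2 * v * x) = 2 * x := by
      rw [ht, ← Real.sqrt_mul (by positivity)]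
      have : 2 * x / v * (2 * v * x) = (2 * x) ^ 2 := by field_simp
      rw [this, Real.sqrt_sq (by positivity)]
    have hset : integrableExpSet X P = Set.univ := by
      ext t; simpa [integrableExpSet] using iX t
    have hlog : Real.log (mgf X P t) ≤ -t * E + E * t ^ 2 + m * s * (t ^ 2 / 2 + t ^ 3 / 16) := by
      refine log_le_of_diff_ineq (F := mgf X P)
        (F' := fun t => ∫ ω, X ω * Real.exp (t * X ω) ∂P) hE0 hs0 hs1 (Nat.cast_nonneg m)
        (fun t => hasDerivAt_mgf (by rw [hset, interior_univ]; trivial))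
        (fun t => mgf_pos (iX t)) mgf_zero ?_ (fun r hr0 hr => ?_) ht0 ht2
      · simp [hX, hE, integral_neg]
      · refine laplace_diff_ineq hφ h1 h0 ν hr0.le hr (by positivity) ?_ (hc r hr0 hr) P hP _ _
          rfl rfl
        have : s * (r ^ 2 / 2 + 5 * r ^ 3 / 8) ≤ 1 * (r ^ 2 / 2 + 5 * r ^ 3 / 8) := by gcongr
        have h3 : r ^ 2 ≤ 1 / 4 := by nlinarith
        have h4 : r ^ 3 ≤ 1 / 8 := by nlinarith
        linarith
    set r := Real.sqrt (2 * v * x) + x / 8 with hr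
    have hsub : {ω : Fin m → Ω | supOn φ Finset.univ ω < E - r} ⊆ {ω | r - E ≤ X ω} := fun ω hω => by
      simp only [Set.mem_ofPred_eq, hX] at hω ⊢; linarith
    refine (measureReal_mono hsub).trans ((measure_ge_le_exp_mul_mgf (r - E) ht0.le (iX t)).trans ?_)
    rw [← Real.exp_log (mgf_pos (iX t)), ← Real.exp_add, Real.exp_le_exp]
    have h5 : m * s * t ^ 3 ≤ v * t ^ 3 := by
      have : m * s ≤ v := by linarith
      gcongr
    have h6 : v * t ^ 3 = 2 * x * t := by rw [← htsq]; ring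
    have h7 : t * r = 2 * x + t * x / 8 := by rw [hr, mul_add, htr]; ring
    have h8 : E * t ^ 2 + m * s * t ^ 2 / 2 = x := by
      have : E * t ^ 2 + m * s * t ^ 2 / 2 = t ^ 2 * v / 2 := by rw [hv]; ring
      rw [this, htsq]; ring
    nlinarith

/-- The two-point bound behind the variance term: the left side minus `1 - t` is second order in
`y` because the sign is symmetric. -/
lemma two_point_bound {t y : ℝ} (ht0 : 0 < t) (ht : t ≤ 1 / 2) (hy : |y| ≤ 1) :
    1 - t - y ^ 2 * (t ^ 2 / 2 + 5 * t ^ 3 / 8) ≤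
      ((1 - t + t * y) * Real.exp (-(t * y)) + (1 - t + t * -y) * Real.exp (-(t * -y))) / 2 := by
  wlog hy0 : 0 ≤ y generalizing y
  · have := this (y := -y) (by rwa [abs_neg]) (by linarith)
    simp only [neg_neg, neg_sq] at this
    linarith
  have hy1 : y ≤ 1 := le_of_abs_le hy
  set s := t * y with hs
  have hs0 : 0 ≤ s := by positivity
  have hst : s ≤ t := by nlinarith
  have hcosh : 1 + s ^ 2 / 2 ≤ (Real.exp s + Real.exp (-s)) / 2 := by
    have h1 : s / 2 ≤ Real.sinh (s / 2) := Real.self_le_sinh_iff.2 (by linarith)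
    have h2 := Real.cosh_two_mul (s / 2)
    rw [Real.cosh_sq, mul_div_cancel₀ s two_ne_zero] at h2
    rw [← Real.cosh_eq, h2]
    nlinarith
  have hsinh : (Real.exp s - Real.exp (-s)) / 2 ≤ s * (1 + t / 8) := by
    have b1 := Real.exp_bound (x := s) (by rw [abs_of_nonneg hs0]; linarith) (n := 3) (by norm_num)
    have b2 := Real.exp_bound (x := -s) (by rw [abs_neg, abs_of_nonneg hs0]; linarith)
      (n := 3) (by norm_num)
    rw [abs_neg] at b2
    rw [abs_of_nonneg hs0] at b1 b2
    norm_num [Finset.sum_range_succ, Nat.factorial] at b1 b2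
    have c1 := le_of_abs_le b1
    have c2 := neg_le_of_abs_le b2
    have h3 : s ^ 3 ≤ s * t / 2 := by nlinarith [mul_nonneg hs0 hs0]
    nlinarith
  have e : -(t * -y) = s := by rw [hs]; ring
  have e2 : t * -y = -s := by rw [hs]; ring
  have e3 : y ^ 2 * (t ^ 2 / 2 + 5 * t ^ 3 / 8) = s ^ 2 * (1 / 2 + 5 * t / 8) := by
    rw [hs]; ring
  rw [e, e2, e3]
  have h4 := mul_le_mul_of_nonneg_left hsinh hs0
  have h5 := mul_le_mul_of_nonneg_left hcosh (show 0 ≤ 1 - t by linarith)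
  nlinarith

/-! ### Rademacher averages -/

/-- The uniform distribution on signs. -/
def signMeasure : Measure Bool := (PMF.uniformOfFintype Bool).toMeasure

instance : IsProbabilityMeasure signMeasure := by unfold signMeasure; infer_instance

lemma integral_signMeasure (u : Bool → ℝ) :
    ∫ c, u c ∂signMeasure = (u true + u false) / 2 := by
  unfold signMeasure
  rw [PMF.integral_eq_sum]
  simp
  ring

instance (n m : ℕ) : IsProbabilityMeasure (radMeasure n m) := by
  unfold radMeasure; infer_instance

/-- A single row of signs under `radMeasure` has independent uniform entries. -/
lemma measurePreserving_radMeasure (m : ℕ) :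
    MeasurePreserving (fun σ : Fin 1 → Fin m → Bool => σ 0) (radMeasure 1 m)
      (Measure.pi fun _ : Fin m => signMeasure) := by
  refine ⟨measurable_pi_apply 0, ?_⟩
  refine Measure.ext_of_singleton fun c => ?_
  rw [Measure.map_apply (measurable_pi_apply 0) (measurableSet_singleton c),
    Measure.pi_singleton]
  have : (fun σ : Fin 1 → Fin m → Bool => σ 0) ⁻¹' {c} = {fun _ => c} := by
    ext σ
    simp only [Set.mem_preimage, Set.mem_singleton_iff]
    constructor
    · intro h; funext j; rw [Subsingleton.elim j 0, h]
    · intro h; rw [h]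
  rw [this]
  unfold radMeasure signMeasure
  rw [PMF.toMeasure_apply_singleton _ _ (measurableSet_singleton _)]
  simp [ENNReal.inv_pow]

/-- Pairing each sample point with its sign turns the joint law of `(S, σ)` into a product of
`m` copies of `μ ⊗ signMeasure`. -/
lemma measurePreserving_pairing {X : Type*} [MeasurableSpace X] (μ : Measure X)
    [IsProbabilityMeasure μ] (m : ℕ) :
    MeasurePreserving (fun (p : (Fin m → X) × (Fin 1 → Fin m → Bool)) (k : Fin m) =>
      (p.1 k, p.2 0 k)) ((Measure.pi fun _ : Fin m => μ).prod (radMeasure 1 m))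
      (Measure.pi fun _ : Fin m => μ.prod signMeasure) := by
  have h1 := (measurePreserving_arrowProdEquivProdArrow X Bool (Fin m) (fun _ => μ)
    (fun _ => signMeasure)).symm
  have h2 := (MeasurePreserving.id (Measure.pi fun _ : Fin m => μ)).prod
    (measurePreserving_radMeasure m)
  exact h1.comp h2

theorem stmt_9 {X : Type*} [MeasurableSpace X] {ι : Type*} [Countable ι]
    (f : ι → X → ℝ) (a b : ℝ) (ha : a ≤ 0) (hb : 0 < b)
    (hmeas : ∀ l : ι, Measurable (f l))
    (hrange : ∀ (l : ι) (x : X), f l x ∈ Set.Icc a b)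
    (hzero : ∃ l₀ : ι, ∀ x : X, f l₀ x = 0)
    (μ : Measure X) [IsProbabilityMeasure μ] (m : ℕ) (hm : 0 < m)
    (δ : ℝ) (hδ : δ ∈ Set.Ioo (0 : ℝ) 1) :
    1 - δ ≤ (((Measure.pi fun _ : Fin m => μ).prod (radMeasure 1 m))
        {p : (Fin m → X) × (Fin 1 → Fin m → Bool) |
          rc f 1 m μ ≤ mcera f 1 m p.1 p.2 +
            Real.sqrt (2 * (2 * max |a| |b| * rc f 1 m μ + wimpyVar f μ) *
              Real.log (1 / δ) / m) +
            max |a| |b| * Real.log (1 / δ) / (8 * m)}).toReal := by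
  set z := max |a| |b| with hz
  have hzpos : 0 < z := lt_max_of_lt_right (abs_pos.2 hb.ne')
  have hmpos : (0 : ℝ) < m := by exact_mod_cast hm
  have hfz : ∀ l x, |f l x| ≤ z := fun l x => abs_le_max_abs_abs (hrange l x).1 (hrange l x).2
  set L := Real.log (1 / δ) with hL
  have hLpos : 0 < L := Real.log_pos (by rw [lt_div_iff₀ hδ.1]; linarith [hδ.2])
  have hexpL : Real.exp (-L) = δ := by
    rw [hL, one_div, Real.log_inv, neg_neg, Real.exp_log hδ.1]
  -- the signed class, rescaled to take values in `[-1, 1]`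
  set φ : ι → X × Bool → ℝ := fun l p => sgnB p.2 * (f l p.1 / z) with hφdef
  have hsg : Measurable sgnB := measurable_of_countable _
  have hφ : ∀ l, Measurable (φ l) := fun l =>
    (hsg.comp measurable_snd).mul (((hmeas l).comp measurable_fst).div_const z)
  have hfz1 : ∀ l x, |f l x / z| ≤ 1 := fun l x => by
    rw [abs_div, abs_of_pos hzpos, div_le_one hzpos]; exact hfz l x
  have hφ1 : ∀ l p, |φ l p| ≤ 1 := fun l p => by
    have : |sgnB p.2| = 1 := by unfold sgnB; split_ifs <;> simp
    rw [hφdef, abs_mul, this, one_mul]; exact hfz1 l p.1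
  have hφ0 : ∃ l₀, ∀ p, φ l₀ p = 0 := by
    obtain ⟨l₀, h⟩ := hzero
    exact ⟨l₀, fun p => by simp [hφdef, h]⟩
  obtain ⟨l₀, hl₀⟩ := hzero
  have hne : Nonempty ι := ⟨l₀⟩
  -- the wimpy variance of the rescaled class
  set s := wimpyVar f μ / z ^ 2 with hs
  have hsqint : ∀ l, Integrable (fun x => (f l x / z) ^ 2) μ := fun l =>
    integrable_of_abs_le (((hmeas l).div_const z).pow_const 2) 1 fun x => by
      rw [abs_pow]; exact pow_le_one₀ (abs_nonneg _) (hfz1 l x)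
  have hvar_le : ∀ l, ∫ x, (f l x) ^ 2 ∂μ ≤ z ^ 2 := fun l => by
    have h2 : ∀ x, (f l x) ^ 2 = z ^ 2 * (f l x / z) ^ 2 := fun x => by field_simp
    have h3 : ∫ x, (f l x / z) ^ 2 ∂μ ≤ ∫ _, (1 : ℝ) ∂μ :=
      integral_mono (hsqint l) (integrable_const 1) fun x => by
        have := hfz1 l x
        rw [← sq_abs]; exact pow_le_one₀ (abs_nonneg _) this
    simp only [h2, integral_const_mul]
    simp only [integral_const, probReal_univ, smul_eq_mul, one_mul] at h3
    nlinarith [sq_nonneg z]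
  have hvar_bdd : BddAbove (Set.range fun l => ∫ x, (f l x) ^ 2 ∂μ) :=
    ⟨z ^ 2, by rintro _ ⟨l, rfl⟩; exact hvar_le l⟩
  have hwim0 : 0 ≤ wimpyVar f μ := Real.iSup_nonneg fun l => integral_nonneg fun x => sq_nonneg _
  have hwim1 : wimpyVar f μ ≤ z ^ 2 := ciSup_le hvar_le
  have hs0 : 0 ≤ s := by positivity
  have hs1 : s ≤ 1 := by rw [hs, div_le_one (by positivity)]; exact hwim1
  have hsl : ∀ l, ∫ x, (f l x / z) ^ 2 ∂μ ≤ s := fun l => by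
    simp only [div_pow, integral_div]
    rw [hs]
    gcongr
    exact le_ciSup hvar_bdd l
  have hc : ∀ t, 0 < t → t ≤ 1 / 2 → ∀ l, 1 - t - s * (t ^ 2 / 2 + 5 * t ^ 3 / 8) ≤
      ∫ p, (1 - t + t * φ l p) * Real.exp (-(t * φ l p)) ∂(μ.prod signMeasure) := by
    intro t ht0 ht l
    have hInt : Integrable (fun p => (1 - t + t * φ l p) * Real.exp (-(t * φ l p)))
        (μ.prod signMeasure) := by
      have := hφ l
      refine integrable_of_abs_le (by fun_prop) (2 * Real.exp 1) fun p => ?_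
      have hb := abs_le.1 (hφ1 l p)
      have h2 : |1 - t + t * φ l p| ≤ 2 := by
        rw [abs_le]; constructor <;> nlinarith
      have h3 : -(t * φ l p) ≤ 1 := by nlinarith
      rw [abs_mul, abs_of_pos (Real.exp_pos _)]
      gcongr
    have hInt2 := hInt.integral_prod_left
    rw [integral_prod _ hInt]
    set B := t ^ 2 / 2 + 5 * t ^ 3 / 8 with hB
    have hB0 : 0 ≤ B := by positivity
    have hmono : ∫ x, ((1 - t) - (f l x / z) ^ 2 * B) ∂μ ≤ _ :=
      integral_mono ((integrable_const (1 - t)).sub ((hsqint l).mul_const B)) hInt2 fun x => by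
        simp only [integral_signMeasure]
        have := two_point_bound ht0 ht (hfz1 l x)
        simpa [hφdef, sgnB] using this
    rw [integral_sub (integrable_const _) ((hsqint l).mul_const B), integral_mul_const] at hmono
    simp only [integral_const, probReal_univ, smul_eq_mul, one_mul] at hmono
    have := mul_le_mul_of_nonneg_right (hsl l) hB0
    linarith
  -- the empirical average as a multiple of the supremum over the signed class
  set P := Measure.pi fun _ : Fin m => μ.prod signMeasure with hP
  set Ψ : (Fin m → X) × (Fin 1 → Fin m → Bool) → Fin m → X × Bool :=
    fun p k => (p.1 k, p.2 0 k) with hΨ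
  have hΨmp : MeasurePreserving Ψ ((Measure.pi fun _ : Fin m => μ).prod (radMeasure 1 m)) P :=
    measurePreserving_pairing μ m
  have hmc : ∀ S σ, mcera f 1 m S σ = z / m * supOn φ Finset.univ (Ψ (S, σ)) := by
    intro S σ
    unfold mcera supOn
    rw [Real.mul_iSup_of_nonneg (by positivity)]
    simp only [Nat.cast_one, inv_one, one_mul, Finset.univ_unique, Finset.sum_singleton,
      Fin.default_eq_zero, Fin.isValue]
    congr 1; funext l
    rw [Finset.mul_sum, Finset.mul_sum]
    refine Finset.sum_congr rfl fun k _ => ?_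
    simp only [hφdef, hΨ]
    field_simp
  set E := ∫ ω, supOn φ Finset.univ ω ∂P with hE
  have mZ : Measurable (supOn φ (Finset.univ : Finset (Fin m))) := measurable_supOn hφ _
  have hrc : rc f 1 m μ = z / m * E := by
    have iZ : Integrable (supOn φ (Finset.univ : Finset (Fin m))) P :=
      integrable_of_abs_le mZ m (abs_supOn_le hφ1 hφ0 _)
    have iZΨ : Integrable (fun p => z / m * supOn φ Finset.univ (Ψ p))
        ((Measure.pi fun _ : Fin m => μ).prod (radMeasure 1 m)) :=
      (hΨmp.integrable_comp_of_integrable iZ).const_mul _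
    unfold rc era
    simp only [hmc]
    rw [← integral_prod (fun p => z / m * supOn φ Finset.univ (Ψ p)) iZΨ, integral_const_mul, hE,
      ← hΨmp.map_eq, integral_map hΨmp.measurable.aemeasurable mZ.aestronglyMeasurable]
  have htail := lower_tail_supOn hφ hφ1 hφ0 (μ.prod signMeasure) hs0 hs1 hc P hP E hE hLpos
  rw [hexpL] at htail
  set r := Real.sqrt (2 * (2 * E + m * s) * L) + L / 8 with hr
  have hrad : Real.sqrt (2 * (2 * z * rc f 1 m μ + wimpyVar f μ) * L / m) +
      z * L / (8 * m) = z / m * r := by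
    have h2 : 2 * (2 * z * rc f 1 m μ + wimpyVar f μ) * L / m =
        (z / m) ^ 2 * (2 * (2 * E + m * s) * L) := by
      rw [hrc, hs]; field_simp
    rw [h2, Real.sqrt_mul (sq_nonneg _), Real.sqrt_sq (by positivity), hr]
    field_simp
  set B : Set (Fin m → X × Bool) := {ω | supOn φ Finset.univ ω < E - r} with hB
  have mB : MeasurableSet B := measurableSet_lt mZ measurable_const
  set PR := (Measure.pi fun _ : Fin m => μ).prod (radMeasure 1 m) with hPR
  have hB' : PR.real (Ψ ⁻¹' B) ≤ δ := by
    rw [hΨmp.measureReal_preimage mB.nullMeasurableSet]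
    exact htail
  have hcompl := probReal_compl_eq_one_sub (μ := PR) (hΨmp.measurable mB)
  calc 1 - δ ≤ PR.real (Ψ ⁻¹' B)ᶜ := by rw [hcompl]; linarith
    _ ≤ _ := by
      refine measureReal_mono fun p hp => ?_
      have hp' : E - r ≤ supOn φ Finset.univ (Ψ p) := not_lt.1 hp
      change rc f 1 m μ ≤ mcera f 1 m p.1 p.2 + _ + _
      rw [add_assoc, hrad, hrc, hmc]
      have := mul_le_mul_of_nonneg_left hp' (show 0 ≤ z / m by positivity)
      linarith
end
end
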